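/- arXiv:2510.27360 — 2 statements merged into one kernel-verified Lean document; each statement's English description precedes it below -/
import Mathlib

section
/- For f(x) = x^s with s > 0 on the interval (0,b), the mean oscillation satisfies osc(f,(0,b)) = b^s · 2s/(1+s)^{2+1/s}, and the total variation satisfies (1/4)|Df|((0,b)) = b^s/4. Hence osc(f,(0,b)) = (1/4)|Df|((0,b)) if and only if 8s = (1+s)^{2+1/s}. -/
open MeasureTheory Set Filter
open scoped ENNReal

/-- Mean oscillation of `f` over the interval `(x, y)`. -/
noncomputable def oscI (f : ℝ → ℝ) (x y : ℝ) : ℝ :=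
  (y - x)⁻¹ * ∫ t in x..y, |f t - (y - x)⁻¹ * ∫ s in x..y, f s|

/-- Total variation of the distributional derivative of `f` on `(x, y)`:
the supremum of `∫ f φ'` over smooth `φ` supported in `(x, y)` with `‖φ‖_∞ ≤ 1`. -/
noncomputable def varD (f : ℝ → ℝ) (x y : ℝ) : ℝ≥0∞ :=
  ⨆ φ : {φ : ℝ → ℝ // ContDiff ℝ (⊤ : ℕ∞) φ ∧ HasCompactSupport φ ∧
      tsupport φ ⊆ Set.Ioo x y ∧ ∀ t, |φ t| ≤ 1},
    ENNReal.ofReal (∫ t in x..y, f t * deriv (φ : ℝ → ℝ) t)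

/-!
A monotone right-continuous `f` has distributional derivative its Stieltjes measure `μ`: writing
`φ y - φ t` as the integral of `φ'` over `(t, y]` and exchanging integrals gives
`∫ f φ' = -∫ φ dμ`, so inner regularity of `μ` yields `|Df|((x, y)) = μ((x, y))`, which is
`f y - f x` when `f` is continuous.
If a monotone `f` equals its mean at `c`, then `f - f c` has integral zero and changes sign only at
`c`, so the mean oscillation is twice the contribution of `(x, c)`. For `t ^ s` on `(0, b)` this
point is `c = b / (1 + s) ^ (1 / s)`.
-/

lemma exists_contDiff_eqOn_one_tsupport_subset {E : Type*} [NormedAddCommGroup E]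
    [NormedSpace ℝ E] [FiniteDimensional ℝ E] {K U : Set E} (hK : IsCompact K) (hU : IsOpen U)
    (hKU : K ⊆ U) :
    ∃ g : E → ℝ, ContDiff ℝ (⊤ : ℕ∞) g ∧ HasCompactSupport g ∧ tsupport g ⊆ U ∧
      (∀ x, g x ∈ Icc 0 1) ∧ EqOn g 1 K := by
  obtain ⟨L, hL, hKL, hLU⟩ := exists_compact_between hK hU hKU
  obtain ⟨g, hg, hg01, hgs, hg1⟩ := exists_contMDiff_support_eq_eq_one_iff (n := ⊤)
    (modelWithCornersSelf ℝ E) isOpen_interior hK.isClosed hKL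
  have hsL : Function.support g ⊆ L := hgs.subset.trans interior_subset
  exact ⟨g, hg.contDiff, .of_support_subset_isCompact hL hsL,
    (closure_minimal hsL hL.isClosed).trans hLU, fun x => hg01 (mem_range_self x),
    fun x hx => (hg1 x).1 hx⟩

section Stieltjes

variable (f : StieltjesFunction ℝ) {x y : ℝ}

lemma measureReal_stieltjes_Ioc (hxy : x ≤ y) : f.measure.real (Ioc x y) = f y - f x := by
  rw [measureReal_def, f.measure_Ioc, ENNReal.toReal_ofReal (sub_nonneg.2 (f.mono hxy))]

lemma setIntegral_Ioc_stieltjes_intervalIntegral {g : ℝ → ℝ} (hxy : x ≤ y)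
    (hg : IntervalIntegrable g volume x y) :
    ∫ t in Ioc x y, (∫ u in t..y, g u) ∂f.measure = ∫ u in x..y, (f u - f x) * g u := by
  let G : ℝ → ℝ → ℝ := fun t u => {p : ℝ × ℝ | p.1 ≤ p.2}.indicator (fun p => g p.2) (t, u)
  have hG : Integrable (Function.uncurry G)
      ((f.measure.restrict (Ioc x y)).prod (volume.restrict (Ioc x y))) :=
    have : IsFiniteMeasure (f.measure.restrict (Ioc x y)) := ⟨by simp⟩
    (Integrable.comp_snd hg.1 _).indicator (measurableSet_le measurable_fst measurable_snd)
  calc ∫ t in Ioc x y, (∫ u in t..y, g u) ∂f.measure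
      = ∫ t in Ioc x y, (∫ u in Ioc x y, G t u) ∂f.measure := by
        refine setIntegral_congr_fun measurableSet_Ioc fun t ht => ?_
        have hset : Ioc x y ∩ Ici t = Icc t y := by grind
        change _ = ∫ u in Ioc x y, (Ici t).indicator g u
        rw [setIntegral_indicator measurableSet_Ici, hset, integral_Icc_eq_integral_Ioc,
          intervalIntegral.integral_of_le ht.2]
    _ = ∫ u in Ioc x y, ∫ t in Ioc x y, G t u ∂f.measure := integral_integral_swap hG
    _ = ∫ u in x..y, (f u - f x) * g u := by
        rw [intervalIntegral.integral_of_le hxy]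
        refine setIntegral_congr_fun measurableSet_Ioc fun u hu => ?_
        have hset : Ioc x y ∩ Iic u = Ioc x u := by grind
        change ∫ t in Ioc x y, (Iic u).indicator (fun _ => g u) t ∂f.measure = _
        rw [setIntegral_indicator measurableSet_Iic, hset, setIntegral_const,
          measureReal_stieltjes_Ioc f hu.1.le, smul_eq_mul]

lemma setIntegral_Ioc_stieltjes_eq_sub_integral_mul_deriv {φ φ' : ℝ → ℝ} (hxy : x ≤ y)
    (hφ : ∀ t ∈ Icc x y, HasDerivAt φ (φ' t) t) (hφ' : IntervalIntegrable φ' volume x y) :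
    ∫ t in Ioc x y, φ t ∂f.measure = f y * φ y - f x * φ x - ∫ t in x..y, f t * φ' t := by
  have hftc (t : ℝ) (ht : t ∈ Icc x y) : ∫ u in t..y, φ' u = φ y - φ t := by
    have hty : uIcc t y ⊆ Icc x y := uIcc_subset_Icc ht (right_mem_Icc.2 hxy)
    exact intervalIntegral.integral_eq_sub_of_hasDerivAt (fun u hu => hφ u (hty hu))
      (hφ'.mono_set (hty.trans Icc_subset_uIcc))
  have hconst : IntegrableOn (fun _ => φ y) (Ioc x y) f.measure := integrableOn_const (by simp)
  have hφint : IntegrableOn φ (Ioc x y) f.measure :=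
    (HasDerivAt.continuousOn hφ).integrableOn_Icc.mono_set Ioc_subset_Icc_self
  have hfφ' : IntervalIntegrable (fun t => f t * φ' t) volume x y := by
    rw [intervalIntegrable_iff_integrableOn_Ioc_of_le hxy] at hφ' ⊢
    refine hφ'.bdd_mul f.mono.measurable.aestronglyMeasurable
      (c := max |f x| |f y|) (ae_restrict_of_forall_mem measurableSet_Ioc fun t ht => ?_)
    exact abs_le_max_abs_abs (f.mono ht.1.le) (f.mono ht.2)
  have hswap : ∫ t in Ioc x y, (φ y - φ t) ∂f.measure = ∫ u in x..y, (f u - f x) * φ' u := by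
    rw [← setIntegral_Ioc_stieltjes_intervalIntegral f hxy hφ']
    exact setIntegral_congr_fun measurableSet_Ioc fun t ht => (hftc t (Ioc_subset_Icc_self ht)).symm
  simp only [sub_mul] at hswap
  rw [integral_sub hconst hφint, setIntegral_const, measureReal_stieltjes_Ioc f hxy,
    intervalIntegral.integral_sub hfφ' (hφ'.const_mul _), intervalIntegral.integral_const_mul,
    hftc x (left_mem_Icc.2 hxy), smul_eq_mul] at hswap
  linarith

lemma integral_mul_deriv_eq_neg_setIntegral_stieltjes {φ : ℝ → ℝ} (hxy : x ≤ y)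
    (hφ : ContDiff ℝ 1 φ) (hsupp : tsupport φ ⊆ Ioo x y) :
    ∫ t in x..y, f t * deriv φ t = -∫ t in Ioo x y, φ t ∂f.measure := by
  have hφ0 (t : ℝ) (ht : t ∉ Ioo x y) : φ t = 0 :=
    image_eq_zero_of_notMem_tsupport fun h => ht (hsupp h)
  have hIoo : ∫ t in Ioc x y, φ t ∂f.measure = ∫ t in Ioo x y, φ t ∂f.measure :=
    setIntegral_eq_of_subset_of_forall_sdiff_eq_zero measurableSet_Ioc Ioo_subset_Ioc_self
      fun t ht => hφ0 t ht.2
  have hparts := setIntegral_Ioc_stieltjes_eq_sub_integral_mul_deriv f hxy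
    (fun t _ => (hφ.differentiable one_ne_zero t).hasDerivAt)
    ((hφ.continuous_deriv le_rfl).intervalIntegrable x y)
  rw [hIoo, hφ0 x (by simp), hφ0 y (by simp)] at hparts
  linarith

lemma varD_stieltjes_le_measure_Ioo (hxy : x ≤ y) : varD f x y ≤ f.measure (Ioo x y) := by
  refine iSup_le fun ⟨φ, hφ, _, hsupp, hle⟩ => ?_
  have hfin : f.measure (Ioo x y) < ⊤ := measure_Ioo_lt_top
  rw [integral_mul_deriv_eq_neg_setIntegral_stieltjes f hxy (hφ.of_le (by simp)) hsupp,
    ← ofReal_measureReal hfin.ne]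
  gcongr
  calc -∫ t in Ioo x y, φ t ∂f.measure ≤ ‖∫ t in Ioo x y, φ t ∂f.measure‖ := neg_le_abs _
    _ ≤ 1 * f.measure.real (Ioo x y) :=
      norm_setIntegral_le_of_norm_le_const hfin fun t _ => hle t
    _ = f.measure.real (Ioo x y) := one_mul _

lemma measure_le_varD_stieltjes {K : Set ℝ} (hxy : x ≤ y) (hK : IsCompact K) (hKxy : K ⊆ Ioo x y) :
    f.measure K ≤ varD f x y := by
  obtain ⟨g, hg, hgc, hgs, hg01, hg1⟩ :=
    exists_contDiff_eqOn_one_tsupport_subset hK isOpen_Ioo hKxy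
  have hgs' : tsupport (-g) ⊆ Ioo x y := by rwa [tsupport_neg]
  have hle (t : ℝ) : |(-g) t| ≤ 1 := by
    rw [Pi.neg_apply, abs_neg, abs_of_nonneg (hg01 t).1]
    exact (hg01 t).2
  have hgK : f.measure.real K ≤ ∫ t in x..y, f t * deriv (-g) t :=
    calc f.measure.real K = ∫ t in K, g t ∂f.measure := by
          rw [setIntegral_congr_fun hK.measurableSet hg1]
          simp
      _ ≤ ∫ t in Ioo x y, g t ∂f.measure :=
        setIntegral_mono_set (hg.continuous.integrableOn_Icc.mono_set Ioo_subset_Icc_self)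
          (.of_forall fun t => (hg01 t).1) hKxy.eventuallyLE
      _ = ∫ t in x..y, f t * deriv (-g) t := by
        rw [integral_mul_deriv_eq_neg_setIntegral_stieltjes f hxy (φ := -g)
          (hg.neg.of_le (by simp)) hgs', integral_neg', neg_neg]
  rw [← ofReal_measureReal hK.measure_ne_top]
  exact (ENNReal.ofReal_le_ofReal hgK).trans
    (le_iSup_of_le ⟨-g, hg.neg, hgc.neg, hgs', hle⟩ le_rfl)

theorem varD_stieltjes (hxy : x ≤ y) : varD f x y = f.measure (Ioo x y) := by
  refine (varD_stieltjes_le_measure_Ioo f hxy).antisymm ?_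
  rw [isOpen_Ioo.measure_eq_iSup_isCompact]
  exact iSup₂_le fun K hKxy => iSup_le fun hK => measure_le_varD_stieltjes f hxy hK hKxy

end Stieltjes

lemma varD_congr {f g : ℝ → ℝ} {x y : ℝ} (h : EqOn f g (uIcc x y)) : varD f x y = varD g x y := by
  unfold varD
  congr! 3 with φ
  exact intervalIntegral.integral_congr fun t ht => by simp only [h ht]

theorem varD_of_monotoneOn {f : ℝ → ℝ} {x y : ℝ} (hxy : x ≤ y) (hmono : MonotoneOn f (Icc x y))
    (hcont : ContinuousOn f (Icc x y)) : varD f x y = ENNReal.ofReal (f y - f x) := by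
  let F : ℝ → ℝ := IccExtend hxy (f ∘ Subtype.val)
  have hFcont : Continuous F := (continuousOn_iff_continuous_domRestrict.1 hcont).Icc_extend'
  let S : StieltjesFunction ℝ :=
    ⟨F, hmono.monotone.IccExtend hxy, fun _ => hFcont.continuousWithinAt⟩
  have hfS : EqOn f S (uIcc x y) := fun t ht => by
    rw [uIcc_of_le hxy] at ht
    exact (IccExtend_of_mem hxy (f ∘ Subtype.val) ht).symm
  have hleft : Function.leftLim S y = S y := hFcont.continuousWithinAt.leftLim_eq
  rw [varD_congr hfS, varD_stieltjes S hxy, S.measure_Ioo, hleft, hfS left_mem_uIcc,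
    hfS right_mem_uIcc]

theorem oscI_of_monotoneOn {f : ℝ → ℝ} {x y c : ℝ} (hxy : x < y) (hf : MonotoneOn f (Icc x y))
    (hc : c ∈ Icc x y) (hmean : (y - x)⁻¹ * ∫ t in x..y, f t = f c) :
    oscI f x y = (y - x)⁻¹ * (2 * ∫ t in x..c, (f c - f t)) := by
  have hfint : IntervalIntegrable f volume x y :=
    MonotoneOn.intervalIntegrable (by rwa [uIcc_of_le hxy.le])
  have hint : IntervalIntegrable (fun t => f t - f c) volume x y :=
    hfint.sub intervalIntegrable_const
  have hc' : c ∈ uIcc x y := Icc_subset_uIcc hc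
  have hintl := hint.mono_set (uIcc_subset_uIcc_left hc')
  have hintr := hint.mono_set (uIcc_subset_uIcc_right hc')
  have hzero : (∫ t in x..c, (f t - f c)) + ∫ t in c..y, (f t - f c) = 0 := by
    rw [intervalIntegral.integral_add_adjacent_intervals hintl hintr,
      intervalIntegral.integral_sub hfint intervalIntegrable_const, ← hmean,
      intervalIntegral.integral_const, smul_eq_mul, mul_inv_cancel_left₀ (sub_pos.2 hxy).ne',
      sub_self]
  have hleft : ∫ t in x..c, |f t - f c| = -∫ t in x..c, (f t - f c) := by
    rw [← intervalIntegral.integral_neg]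
    refine intervalIntegral.integral_congr fun t ht => abs_of_nonpos (sub_nonpos.2 ?_)
    rw [uIcc_of_le hc.1] at ht
    exact hf ⟨ht.1, ht.2.trans hc.2⟩ hc ht.2
  have hright : ∫ t in c..y, |f t - f c| = ∫ t in c..y, (f t - f c) := by
    refine intervalIntegral.integral_congr fun t ht => abs_of_nonneg (sub_nonneg.2 ?_)
    rw [uIcc_of_le hc.2] at ht
    exact hf hc ⟨hc.1.trans ht.1, ht.2⟩ ht.1
  have hneg : ∫ t in x..c, (f c - f t) = -∫ t in x..c, (f t - f c) := by
    simp only [← intervalIntegral.integral_neg, neg_sub]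
  rw [oscI, hmean, ← intervalIntegral.integral_add_adjacent_intervals hintl.abs hintr.abs,
    hleft, hright, hneg]
  linear_combination (y - x)⁻¹ * hzero

lemma div_rpow_one_div_rpow {a b s : ℝ} (ha : 0 ≤ a) (hb : 0 ≤ b) (hs : s ≠ 0) :
    (b / a ^ (1 / s)) ^ s = b ^ s / a := by
  rw [Real.div_rpow hb (by positivity), one_div, Real.rpow_inv_rpow ha hs]

lemma inv_mul_integral_rpow_eq_rpow {s b : ℝ} (hs : -1 < s) (hs0 : s ≠ 0) (hb : 0 < b) :
    b⁻¹ * ∫ t in (0 : ℝ)..b, t ^ s = (b / (1 + s) ^ (1 / s)) ^ s := by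
  have hs1 : 0 < 1 + s := by linarith
  rw [integral_rpow (Or.inl hs), div_rpow_one_div_rpow hs1.le hb.le hs0,
    Real.zero_rpow (by linarith), Real.rpow_add_one hb.ne', sub_zero, add_comm s 1]
  field_simp

lemma integral_rpow_sub_rpow {s c : ℝ} (hs : -1 < s) (hc : 0 ≤ c) :
    ∫ t in (0 : ℝ)..c, (c ^ s - t ^ s) = s / (1 + s) * (c * c ^ s) := by
  have hs1 : s + 1 ≠ 0 := by linarith
  rw [intervalIntegral.integral_sub intervalIntegrable_const
      (intervalIntegral.intervalIntegrable_rpow' hs), intervalIntegral.integral_const,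
    integral_rpow (Or.inl hs), Real.zero_rpow hs1, Real.rpow_add_one' hc hs1, smul_eq_mul,
    add_comm 1 s]
  field_simp
  ring

theorem oscI_rpow {s b : ℝ} (hs : 0 < s) (hb : 0 < b) :
    oscI (fun x => x ^ s) 0 b = b ^ s * (2 * s / (1 + s) ^ ((2 : ℝ) + 1 / s)) := by
  have hs1 : 0 < 1 + s := by positivity
  have hs2 : -1 < s := by linarith
  have hroot : 1 ≤ (1 + s) ^ (1 / s) := Real.one_le_rpow (by linarith) (by positivity)
  have hmem : b / (1 + s) ^ (1 / s) ∈ Icc 0 b := ⟨by positivity, div_le_self hb.le hroot⟩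
  have hmean := inv_mul_integral_rpow_eq_rpow hs2 hs.ne' hb
  rw [oscI_of_monotoneOn hb ((Real.monotoneOn_rpow_Ici_of_exponent_nonneg hs.le).mono
      Icc_subset_Ici_self) hmem (by rwa [sub_zero]), integral_rpow_sub_rpow hs2 hmem.1,
    div_rpow_one_div_rpow hs1.le hb.le hs.ne', Real.rpow_add hs1, Real.rpow_two, sub_zero]
  field_simp

theorem varD_rpow {s b : ℝ} (hs : 0 < s) (hb : 0 ≤ b) :
    varD (fun x => x ^ s) 0 b = ENNReal.ofReal (b ^ s) := by
  rw [varD_of_monotoneOn hb ((Real.monotoneOn_rpow_Ici_of_exponent_nonneg hs.le).mono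
    Icc_subset_Ici_self) (Real.continuous_rpow_const hs.le).continuousOn, Real.zero_rpow hs.ne',
    sub_zero]

/-- For `f(x) = x^s` with `s > 0` on `(0, b)`: `osc(f,(0,b)) = b^s · 2s/(1+s)^{2+1/s}` and
`|Df|((0,b)) = b^s`; hence the identity `osc = (1/4)|Df|` holds on `(0,b)` iff
`8s = (1+s)^{2+1/s}`. -/
theorem power_osc_formula (s b : ℝ) (hs : 0 < s) (hb : 0 < b) :
    oscI (fun x => x ^ s) 0 b = b ^ s * (2 * s / (1 + s) ^ ((2 : ℝ) + 1 / s)) ∧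
    varD (fun x => x ^ s) 0 b = ENNReal.ofReal (b ^ s) ∧
    (varD (fun x => x ^ s) 0 b
        = 4 * ENNReal.ofReal (oscI (fun x => x ^ s) 0 b) ↔
      8 * s = (1 + s) ^ ((2 : ℝ) + 1 / s)) := by
  refine ⟨oscI_rpow hs hb, varD_rpow hs hb.le, ?_⟩
  have hbs : 0 < b ^ s := Real.rpow_pos_of_pos hb s
  rw [varD_rpow hs hb.le, oscI_rpow hs hb, ← ENNReal.ofReal_ofNat 4,
    ← ENNReal.ofReal_mul zero_le_four, ENNReal.ofReal_eq_ofReal_iff hbs.le (by positivity)]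
  field_simp
  constructor <;> intro h <;> linarith
end

section
/- Main theorem: let f : (a,b) → ℝ be locally integrable and suppose that for every nonempty open interval I compactly contained in (a,b) the identity osc(f,I) = (1/4)|Df|(I) holds. Then f equals an affine function almost everywhere on (a,b). -/
open MeasureTheory Set Filter
open scoped ENNReal

/-!
Both sides of the identity are unchanged on a.e. classes, and `|Df|` is superadditive over adjacent
intervals while `osc(f, I)` is at most linear in `|I|` for bounded `f`; so `f` has a representative
`g` which is locally Lipschitz. If `g x = g y` with `x < y`, then `g` is constant on `(x, y)`
because `|Dg| ≥ 2 (max g - min g)` while `osc(g) < (max g - min g) / 2`, and flat intervals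
propagate. Otherwise `g` is strictly monotone, say increasing, `|Dg|(x, y) = g y - g x`, and with
`F' = g` and `g c = (F y - F x) / (y - x)` the identity reads

  `(y - x) (g y - g x) = 8 (g c (c - x) - (F c - F x))`.

The right-hand side is a Legendre transform of `F`, which gains a derivative by the envelope
theorem, so `g` is smooth wherever `g' ≠ 0`. Expanding the identity to fourth order on the
intervals `(t - r, t + r)` yields `3 g' g''' = g'' ^ 2`, that is `(g' ^ (2 / 3))'' = 0`. A
nonconstant `g' = (A t + B) ^ (3 / 2)` does not satisfy the identity, as elimination of `c` shows;
hence `g'` is locally constant where it does not vanish, and being continuous it is constant.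
-/

open scoped Topology

/-! ### Total variation -/

/-- The functions over which `varD f x y` takes its supremum. -/
structure IsTestFunction (φ : ℝ → ℝ) (x y : ℝ) : Prop where
  contDiff : ContDiff ℝ (⊤ : ℕ∞) φ
  hasCompactSupport : HasCompactSupport φ
  tsupport_subset : tsupport φ ⊆ Ioo x y
  abs_le_one : ∀ t, |φ t| ≤ 1

namespace IsTestFunction

variable {φ ψ : ℝ → ℝ} {x y z : ℝ}

theorem zero (x y : ℝ) : IsTestFunction 0 x y where
  contDiff := contDiff_const
  hasCompactSupport := HasCompactSupport.zero
  tsupport_subset := by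
    rw [tsupport_zero]
    exact empty_subset _
  abs_le_one := by simp

theorem neg (hφ : IsTestFunction φ x y) : IsTestFunction (-φ) x y where
  contDiff := hφ.contDiff.neg
  hasCompactSupport := hφ.hasCompactSupport.neg
  tsupport_subset := by
    rw [tsupport_neg]
    exact hφ.tsupport_subset
  abs_le_one := by simpa using hφ.abs_le_one

theorem mono {x' y' : ℝ} (hφ : IsTestFunction φ x y) (hx : x' ≤ x) (hy : y ≤ y') :
    IsTestFunction φ x' y' where
  __ := hφ
  tsupport_subset := hφ.tsupport_subset.trans (Ioo_subset_Ioo hx hy)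

theorem eq_zero_of_notMem (hφ : IsTestFunction φ x y) {t : ℝ} (ht : t ∉ Ioo x y) : φ t = 0 :=
  image_eq_zero_of_notMem_tsupport fun h ↦ ht (hφ.tsupport_subset h)

theorem add (hφ : IsTestFunction φ x y) (hψ : IsTestFunction ψ y z) (hxy : x ≤ y) (hyz : y ≤ z) :
    IsTestFunction (φ + ψ) x z where
  contDiff := hφ.contDiff.add hψ.contDiff
  hasCompactSupport := hφ.hasCompactSupport.add hψ.hasCompactSupport
  tsupport_subset := (tsupport_add φ ψ).trans <| union_subset
    (hφ.mono le_rfl hyz).tsupport_subset (hψ.mono hxy le_rfl).tsupport_subset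
  abs_le_one t := by
    rcases le_total t y with ht | ht
    · simpa [hψ.eq_zero_of_notMem fun h ↦ ht.not_gt h.1] using hφ.abs_le_one t
    · simpa [hφ.eq_zero_of_notMem fun h ↦ ht.not_gt h.2] using hψ.abs_le_one t

theorem intervalIntegral_mul_deriv (hφ : IsTestFunction φ x y) (f : ℝ → ℝ) :
    ∫ t in x..y, f t * deriv φ t = ∫ t, f t * deriv φ t :=
  intervalIntegral.integral_eq_integral_of_support_subset <|
    (Function.support_mul_subset_right _ _).trans <|
      support_deriv_subset.trans (hφ.tsupport_subset.trans Ioo_subset_Ioc_self)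

theorem integrable_mul_deriv (hφ : IsTestFunction φ x y) {f : ℝ → ℝ} (hf : LocallyIntegrable f) :
    Integrable fun t ↦ f t * deriv φ t := by
  simpa using hf.integrable_smul_right_of_hasCompactSupport
    (hφ.contDiff.continuous_deriv (by simp)) hφ.hasCompactSupport.deriv

theorem le_varD (hφ : IsTestFunction φ x y) (f : ℝ → ℝ) :
    ENNReal.ofReal (∫ t, f t * deriv φ t) ≤ varD f x y := by
  rw [← hφ.intervalIntegral_mul_deriv f]
  exact le_iSup_of_le
    ⟨φ, hφ.contDiff, hφ.hasCompactSupport, hφ.tsupport_subset, hφ.abs_le_one⟩ le_rfl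

theorem abs_le_varD (hφ : IsTestFunction φ x y) (f : ℝ → ℝ) :
    ENNReal.ofReal |∫ t, f t * deriv φ t| ≤ varD f x y := by
  rcases abs_choice (∫ t, f t * deriv φ t) with h | h <;> rw [h]
  · exact hφ.le_varD f
  · simpa only [deriv.neg', mul_neg, integral_neg] using hφ.neg.le_varD f

end IsTestFunction

section Variation

variable {f g : ℝ → ℝ} {x y z : ℝ}

theorem varD_le {C : ℝ≥0∞}
    (h : ∀ φ, IsTestFunction φ x y → ENNReal.ofReal (∫ t, f t * deriv φ t) ≤ C) :
    varD f x y ≤ C := by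
  refine iSup_le fun ⟨φ, hφ, hc, hs, h1⟩ ↦ ?_
  have hφ : IsTestFunction φ x y := ⟨hφ, hc, hs, h1⟩
  exact (hφ.intervalIntegral_mul_deriv f).symm ▸ h φ hφ

theorem varD_add_le (hf : LocallyIntegrable f) (hxy : x ≤ y) (hyz : y ≤ z) :
    varD f x y + varD f y z ≤ varD f x z := by
  have sum_le (φ ψ : ℝ → ℝ) (hφ : IsTestFunction φ x y) (hψ : IsTestFunction ψ y z) :
      ENNReal.ofReal (∫ t, f t * deriv φ t) + ENNReal.ofReal (∫ t, f t * deriv ψ t) ≤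
        varD f x z := by
    rcases le_total (∫ t, f t * deriv φ t) 0 with hneg | hφ0
    · rw [ENNReal.ofReal_of_nonpos hneg, zero_add]
      exact (hψ.mono hxy le_rfl).le_varD f
    rcases le_total (∫ t, f t * deriv ψ t) 0 with hneg | hψ0
    · rw [ENNReal.ofReal_of_nonpos hneg, add_zero]
      exact (hφ.mono le_rfl hyz).le_varD f
    have hderiv : deriv (φ + ψ) = deriv φ + deriv ψ := funext fun t ↦
      deriv_add (hφ.contDiff.differentiable (by simp) t) (hψ.contDiff.differentiable (by simp) t)
    rw [← ENNReal.ofReal_add hφ0 hψ0,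
      ← integral_add (hφ.integrable_mul_deriv hf) (hψ.integrable_mul_deriv hf)]
    simpa only [hderiv, Pi.add_apply, mul_add] using (hφ.add hψ hxy hyz).le_varD f
  have hne (x y : ℝ) : Nonempty {φ : ℝ → ℝ // ContDiff ℝ (⊤ : ℕ∞) φ ∧ HasCompactSupport φ ∧
      tsupport φ ⊆ Set.Ioo x y ∧ ∀ t, |φ t| ≤ 1} :=
    have h0 := IsTestFunction.zero x y
    ⟨_, h0.contDiff, h0.hasCompactSupport, h0.tsupport_subset, h0.abs_le_one⟩
  have := hne x y
  have := hne y z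
  refine ENNReal.iSup_add_iSup_le fun ⟨φ, hφ, hφc, hφs, hφ1⟩ ⟨ψ, hψ, hψc, hψs, hψ1⟩ ↦ ?_
  have hφ : IsTestFunction φ x y := ⟨hφ, hφc, hφs, hφ1⟩
  have hψ : IsTestFunction ψ y z := ⟨hψ, hψc, hψs, hψ1⟩
  rw [hφ.intervalIntegral_mul_deriv, hψ.intervalIntegral_mul_deriv]
  exact sum_le φ ψ hφ hψ

theorem varD_neg (f : ℝ → ℝ) (x y : ℝ) : varD (-f) x y = varD f x y := by
  have varD_neg_le (f : ℝ → ℝ) : varD (-f) x y ≤ varD f x y := varD_le fun φ hφ ↦ by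
    simpa only [Pi.neg_apply, deriv.neg', neg_mul, mul_neg] using hφ.neg.le_varD f
  exact (varD_neg_le f).antisymm (by simpa only [neg_neg] using varD_neg_le (-f))

theorem ae_mem_uIoc_imp_iff (hxy : x ≤ y) {p : ℝ → Prop} :
    (∀ᵐ t, t ∈ uIoc x y → p t) ↔ ∀ᵐ t, t ∈ Ioo x y → p t := by
  rw [uIoc_of_le hxy, ← ae_restrict_iff' measurableSet_Ioc, ← ae_restrict_iff' measurableSet_Ioo,
    restrict_Ioo_eq_restrict_Ioc]

theorem varD_congr_ae (hxy : x ≤ y) (h : ∀ᵐ t, t ∈ Ioo x y → f t = g t) :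
    varD f x y = varD g x y := by
  rw [← ae_mem_uIoc_imp_iff hxy] at h
  refine iSup_congr fun φ ↦ congrArg _ (intervalIntegral.integral_congr_ae ?_)
  filter_upwards [h] with t ht hmem
  rw [ht hmem]

/-- Integrating by parts, `∫ g φ' = -∫ g' φ ≤ ∫ g'`. -/
theorem varD_le_of_monotoneOn (hxy : x ≤ y) (hg : AbsolutelyContinuousOnInterval g x y)
    (hmono : MonotoneOn g (Icc x y)) : varD g x y ≤ ENNReal.ofReal (g y - g x) := by
  refine varD_le fun φ hφ ↦ ENNReal.ofReal_le_ofReal ?_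
  have hφac : AbsolutelyContinuousOnInterval φ x y :=
    (hφ.contDiff.of_le (by simp)).contDiffOn.absolutelyContinuousOnInterval
  rw [← hφ.intervalIntegral_mul_deriv, hg.integral_mul_deriv_eq_deriv_mul hφac,
    hφ.eq_zero_of_notMem (t := x) (by simp), hφ.eq_zero_of_notMem (t := y) (by simp),
    ← hg.integral_deriv_eq_sub, mul_zero, mul_zero, sub_zero, zero_sub,
    ← intervalIntegral.integral_neg]
  refine intervalIntegral.integral_mono_on_of_le_Ioo hxy
    (hg.intervalIntegrable_deriv.mul_continuousOn hφac.continuousOn).neg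
    hg.intervalIntegrable_deriv fun t ht ↦ ?_
  have hderiv : 0 ≤ deriv g t := by
    rw [← derivWithin_of_mem_nhds (Icc_mem_nhds ht.1 ht.2)]
    exact hmono.derivWithin_nonneg
  nlinarith [neg_le_of_abs_le (hφ.abs_le_one t)]

end Variation

section Mollification

open ContinuousLinearMap

theorem hasDerivAt_integral_sub_sub {h : ℝ → ℝ} (hh : Continuous h) (s t τ : ℝ) :
    HasDerivAt (fun τ ↦ ∫ u in (τ - t)..(τ - s), h u) (h (τ - s) - h (τ - t)) τ := by
  have hprim (c : ℝ) : HasDerivAt (fun τ ↦ ∫ u in 0..(τ - c), h u) (h (τ - c)) τ :=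
    (hh.integral_hasStrictDerivAt 0 (τ - c)).hasDerivAt.comp_sub_const τ c
  refine ((hprim s).sub (hprim t)).congr_of_eventuallyEq (Eventually.of_forall fun τ ↦ ?_)
  exact (intervalIntegral.integral_interval_sub_left (hh.intervalIntegrable _ _)
    (hh.intervalIntegrable _ _)).symm

variable (ρ : ContDiffBump (0 : ℝ)) {f g : ℝ → ℝ} {x y s t : ℝ}

theorem normed_bump_eq_zero {u : ℝ} (hu : ρ.rOut ≤ |u|) : ρ.normed volume u = 0 := by
  by_contra hne
  have hmem : u ∈ Function.support (ρ.normed volume) := hne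
  rw [ρ.support_normed_eq, Metric.mem_ball, dist_zero_right, Real.norm_eq_abs] at hmem
  exact hmem.not_ge hu

theorem integrable_mul_normed_bump_sub (hf : LocallyIntegrable f) (s : ℝ) :
    Integrable fun τ ↦ f τ * ρ.normed volume (τ - s) := by
  have hcont : Continuous fun τ ↦ ρ.normed volume (τ - s) :=
    ρ.continuous_normed.comp (continuous_sub_right s)
  simpa using hf.integrable_smul_right_of_hasCompactSupport hcont
    (ρ.hasCompactSupport_normed.comp_homeomorph (Homeomorph.subRight s))

theorem convolution_normed_bump (f : ℝ → ℝ) (s : ℝ) :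
    convolution (ρ.normed volume) f (lsmul ℝ ℝ) volume s =
      ∫ τ, f τ * ρ.normed volume (τ - s) := by
  rw [convolution_lsmul_swap]
  refine integral_congr_ae (Eventually.of_forall fun τ ↦ ?_)
  simp only
  rw [smul_eq_mul, mul_comm, ← ρ.normed_neg, neg_sub]

theorem isTestFunction_integral_normed_bump (hst : s ≤ t) (hs : x + ρ.rOut < s)
    (ht : t + ρ.rOut < y) :
    IsTestFunction (fun τ ↦ ∫ u in (τ - t)..(τ - s), ρ.normed volume u) x y := by
  set ψ : ℝ → ℝ := fun τ ↦ ∫ u in (τ - t)..(τ - s), ρ.normed volume u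
  have hderiv (τ : ℝ) := hasDerivAt_integral_sub_sub (ρ.continuous_normed (μ := volume)) s t τ
  have hle (τ : ℝ) : τ - t ≤ τ - s := by linarith
  have hsupport : Function.support ψ ⊆ Icc (s - ρ.rOut) (t + ρ.rOut) := by
    refine fun τ hτ ↦ by_contra fun hmem ↦ hτ ?_
    refine intervalIntegral.integral_zero_ae (Eventually.of_forall fun u hu ↦ ?_)
    rw [uIoc_of_le (hle τ)] at hu
    rw [mem_Icc, not_and_or, not_le, not_le] at hmem
    refine normed_bump_eq_zero ρ (le_abs.2 (hmem.symm.imp (fun h ↦ ?_) fun h ↦ ?_))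
    · linarith [hu.1]
    · linarith [hu.2]
  have htsupport := closure_minimal hsupport isClosed_Icc
  refine ⟨?_, isCompact_Icc.of_isClosed_subset (isClosed_tsupport _) htsupport,
    htsupport.trans (Icc_subset_Ioo (by linarith) (by linarith)), fun τ ↦ ?_⟩
  · rw [contDiff_infty_iff_deriv, funext fun τ ↦ (hderiv τ).deriv]
    have hsmooth (c : ℝ) : ContDiff ℝ (⊤ : ℕ∞) fun τ ↦ ρ.normed volume (τ - c) :=
      ρ.contDiff_normed.comp (contDiff_id.sub contDiff_const)
    exact ⟨fun τ ↦ (hderiv τ).differentiableAt, (hsmooth s).sub (hsmooth t)⟩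
  · rw [abs_of_nonneg (intervalIntegral.integral_nonneg_of_forall (hle τ) ρ.nonneg_normed),
      intervalIntegral.integral_of_le (hle τ), ← ρ.integral_normed (μ := volume)]
    exact setIntegral_le_integral ρ.integrable_normed (Eventually.of_forall ρ.nonneg_normed)

theorem ofReal_abs_convolution_sub_le_varD (hf : LocallyIntegrable f) (hst : s ≤ t)
    (hs : x + ρ.rOut < s) (ht : t + ρ.rOut < y) :
    ENNReal.ofReal |convolution (ρ.normed volume) f (lsmul ℝ ℝ) volume s -
      convolution (ρ.normed volume) f (lsmul ℝ ℝ) volume t| ≤ varD f x y := by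
  convert (isTestFunction_integral_normed_bump ρ hst hs ht).abs_le_varD f using 3
  rw [convolution_normed_bump, convolution_normed_bump,
    ← integral_sub (integrable_mul_normed_bump_sub ρ hf s) (integrable_mul_normed_bump_sub ρ hf t)]
  refine integral_congr_ae (Eventually.of_forall fun τ ↦ ?_)
  simp only
  rw [(hasDerivAt_integral_sub_sub ρ.continuous_normed s t τ).deriv, mul_sub]

/-- A standard mollifying sequence, supported in the balls of radius `2 / (n + 2)`. -/
noncomputable def bumpSeq (n : ℕ) : ContDiffBump (0 : ℝ) where
  rIn := 1 / (n + 2)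
  rOut := 2 / (n + 2)
  rIn_pos := by positivity
  rIn_lt_rOut := div_lt_div_of_pos_right one_lt_two (by positivity)

/-- The mollifications of `f` along `bumpSeq`. -/
noncomputable def mollify (f : ℝ → ℝ) (n : ℕ) : ℝ → ℝ :=
  convolution ((bumpSeq n).normed volume) f (lsmul ℝ ℝ) volume

theorem tendsto_bumpSeq_rOut : Tendsto (fun n ↦ (bumpSeq n).rOut) atTop (𝓝 0) :=
  tendsto_const_nhds.div_atTop
    (tendsto_atTop_add_const_right _ _ tendsto_natCast_atTop_atTop)

theorem ae_tendsto_mollify (hf : LocallyIntegrable f) :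
    ∀ᵐ s, Tendsto (fun n ↦ mollify f n s) atTop (𝓝 (f s)) :=
  ContDiffBump.ae_convolution_tendsto_right_of_locallyIntegrable (K := 2) tendsto_bumpSeq_rOut
    (Eventually.of_forall fun _ ↦ (mul_one_div 2 _).ge) hf

theorem tendsto_mollify (hg : Continuous g) (s : ℝ) :
    Tendsto (fun n ↦ mollify g n s) atTop (𝓝 (g s)) :=
  ContDiffBump.convolution_tendsto_right_of_continuous tendsto_bumpSeq_rOut hg s

theorem ofReal_abs_sub_le_varD_of_tendsto (hf : LocallyIntegrable f)
    (hs : s ∈ Ioo x y) (ht : t ∈ Ioo x y)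
    (hfs : Tendsto (fun n ↦ mollify f n s) atTop (𝓝 (f s)))
    (hft : Tendsto (fun n ↦ mollify f n t) atTop (𝓝 (f t))) :
    ENNReal.ofReal |f s - f t| ≤ varD f x y := by
  wlog hst : s ≤ t generalizing s t
  · rw [abs_sub_comm]
    exact this ht hs hft hfs (le_of_not_ge hst)
  refine le_of_tendsto ((ENNReal.continuous_ofReal.tendsto _).comp (hfs.sub hft).abs) ?_
  filter_upwards [tendsto_bumpSeq_rOut.eventually_lt_const (sub_pos.2 hs.1),
    tendsto_bumpSeq_rOut.eventually_lt_const (sub_pos.2 ht.2)] with n hns hnt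
  exact ofReal_abs_convolution_sub_le_varD _ hf hst (by linarith) (by linarith)

theorem ofReal_abs_sub_le_varD (hg : Continuous g) (hxy : x < y)
    (hs : s ∈ Icc x y) (ht : t ∈ Icc x y) : ENNReal.ofReal |g s - g t| ≤ varD g x y := by
  have hmem : (s, t) ∈ closure (Ioo x y ×ˢ Ioo x y) := by
    rw [closure_prod_eq, closure_Ioo hxy.ne]
    exact ⟨hs, ht⟩
  have hcont : Continuous fun p : ℝ × ℝ ↦ ENNReal.ofReal |g p.1 - g p.2| :=
    ENNReal.continuous_ofReal.comp (by fun_prop)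
  exact closure_minimal (t := {p | ENNReal.ofReal |g p.1 - g p.2| ≤ varD g x y})
    (fun p hp ↦ ofReal_abs_sub_le_varD_of_tendsto hg.locallyIntegrable hp.1 hp.2
      (tendsto_mollify hg _) (tendsto_mollify hg _)) (isClosed_le hcont continuous_const) hmem

end Mollification

/-! ### Mean oscillation -/

section Oscillation

variable {f g : ℝ → ℝ} {x y z : ℝ}

theorem oscI_nonneg (f : ℝ → ℝ) (hxy : x ≤ y) : 0 ≤ oscI f x y :=
  mul_nonneg (inv_nonneg.2 (sub_nonneg.2 hxy))
    (intervalIntegral.integral_nonneg hxy fun _ _ ↦ abs_nonneg _)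

theorem oscI_self (f : ℝ → ℝ) (x : ℝ) : oscI f x x = 0 := by
  simp [oscI]

theorem oscI_neg (f : ℝ → ℝ) (x y : ℝ) : oscI (-f) x y = oscI f x y := by
  simp only [oscI, Pi.neg_apply, intervalIntegral.integral_neg, mul_neg, ← neg_sub', abs_neg]

theorem oscI_congr_ae (hxy : x ≤ y) (h : ∀ᵐ t, t ∈ Ioo x y → f t = g t) :
    oscI f x y = oscI g x y := by
  rw [← ae_mem_uIoc_imp_iff hxy] at h
  rw [oscI, oscI, intervalIntegral.integral_congr_ae h]
  congr 1
  refine intervalIntegral.integral_congr_ae ?_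
  filter_upwards [h] with t ht hmem
  rw [ht hmem]

theorem mul_oscI (f : ℝ → ℝ) (hxy : x < y) :
    (y - x) * oscI f x y = ∫ t in x..y, |f t - (y - x)⁻¹ * ∫ s in x..y, f s| :=
  mul_inv_cancel_left₀ (sub_pos.2 hxy).ne' _

theorem integral_sub_mean (hxy : x < y) (hf : IntervalIntegrable f volume x y) (k : ℝ) :
    ∫ t in x..y, (f t - k) = (y - x) * ((y - x)⁻¹ * (∫ t in x..y, f t) - k) := by
  rw [intervalIntegral.integral_sub hf intervalIntegrable_const,
    intervalIntegral.integral_const, smul_eq_mul, mul_sub,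
    mul_inv_cancel_left₀ (sub_pos.2 hxy).ne']

theorem mul_oscI_le (hxy : x < y) (hf : IntervalIntegrable f volume x y) (k : ℝ) :
    (y - x) * oscI f x y ≤ (∫ t in x..y, |f t - k|) + |∫ t in x..y, (f t - k)| := by
  have hsub (c : ℝ) : IntervalIntegrable (fun t ↦ |f t - c|) volume x y :=
    (hf.sub intervalIntegrable_const).abs
  rw [mul_oscI f hxy, integral_sub_mean hxy hf k]
  set m := (y - x)⁻¹ * ∫ t in x..y, f t
  calc ∫ t in x..y, |f t - m| ≤ ∫ t in x..y, (|f t - k| + |m - k|) :=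
        intervalIntegral.integral_mono_on hxy.le (hsub m)
          ((hsub k).add intervalIntegrable_const) fun t _ ↦ by
          simpa only [sub_sub_sub_cancel_right] using abs_sub (f t - k) (m - k)
    _ = (∫ t in x..y, |f t - k|) + |(y - x) * (m - k)| := by
        rw [intervalIntegral.integral_add (hsub k) intervalIntegrable_const,
          intervalIntegral.integral_const, smul_eq_mul, abs_mul, abs_of_pos (sub_pos.2 hxy)]

theorem mul_oscI_le_two_mul (hxy : x < y) (hf : IntervalIntegrable f volume x y) (k : ℝ) :
    (y - x) * oscI f x y ≤ 2 * ∫ t in x..y, |f t - k| := by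
  linarith [mul_oscI_le hxy hf k,
    intervalIntegral.abs_integral_le_integral_abs (f := fun t ↦ f t - k) (μ := volume) hxy.le]

theorem mul_oscI_le_mul_oscI_add {M : ℝ} (hxy : x < y) (hyz : y ≤ z)
    (hf : IntervalIntegrable f volume x z) (hM : ∀ᵐ t, t ∈ Ioo x z → |f t| ≤ M) :
    (z - x) * oscI f x z ≤ (y - x) * oscI f x y + 4 * M * (z - y) := by
  have hfxy : IntervalIntegrable f volume x y := hf.mono_set (by
    rw [uIcc_of_le hxy.le, uIcc_of_le (hxy.le.trans hyz)]; exact Icc_subset_Icc le_rfl hyz)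
  have hfyz : IntervalIntegrable f volume y z := hf.mono_set (by
    rw [uIcc_of_le hyz, uIcc_of_le (hxy.le.trans hyz)]; exact Icc_subset_Icc hxy.le le_rfl)
  have hm := integral_sub_mean hxy hfxy ((y - x)⁻¹ * ∫ t in x..y, f t)
  have hosc := mul_oscI_le (hxy.trans_le hyz) hf ((y - x)⁻¹ * ∫ t in x..y, f t)
  rw [mul_oscI f hxy]
  set m := (y - x)⁻¹ * ∫ t in x..y, f t with hmdef
  have hmM : |m| ≤ M := by
    have hint : ‖∫ t in x..y, f t‖ ≤ M * |y - x| := by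
      refine intervalIntegral.norm_integral_le_of_norm_le_const_ae
        ((ae_mem_uIoc_imp_iff hxy.le).2 ?_)
      filter_upwards [hM] with t ht hmem using ht ⟨hmem.1, hmem.2.trans_le hyz⟩
    rw [hmdef, abs_mul, abs_inv, inv_mul_le_iff₀ (abs_pos.2 (sub_pos.2 hxy).ne'), mul_comm]
    exact hint
  have htail : ‖∫ t in y..z, |f t - m|‖ ≤ 2 * M * |z - y| := by
    refine intervalIntegral.norm_integral_le_of_norm_le_const_ae ((ae_mem_uIoc_imp_iff hyz).2 ?_)
    filter_upwards [hM] with t ht hmem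
    rw [Real.norm_eq_abs, abs_abs]
    linarith [abs_sub (f t) m, ht ⟨hxy.trans hmem.1, hmem.2⟩]
  have hsub (u v : ℝ) (h : IntervalIntegrable f volume u v) :
      IntervalIntegrable (fun t ↦ f t - m) volume u v := h.sub intervalIntegrable_const
  rw [← intervalIntegral.integral_add_adjacent_intervals (hsub x y hfxy) (hsub y z hfyz), hm,
    sub_self, mul_zero, zero_add, ← intervalIntegral.integral_add_adjacent_intervals
      (hsub x y hfxy).abs (hsub y z hfyz).abs] at hosc
  rw [abs_of_nonneg (sub_nonneg.2 hyz), Real.norm_eq_abs] at htail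
  linarith [le_of_abs_le htail,
    intervalIntegral.abs_integral_le_integral_abs (f := fun t ↦ f t - m) (μ := volume) hyz]

theorem mul_oscI_of_monotoneOn {c : ℝ} (hg : MonotoneOn g (Icc x y)) (hc : c ∈ Ioo x y)
    (hmean : (y - x) * g c = ∫ t in x..y, g t) :
    (y - x) * oscI g x y = 2 * (g c * (c - x) - ∫ t in x..c, g t) := by
  have hxy := hc.1.trans hc.2
  have hxc : IntervalIntegrable g volume x c := (hg.mono (by
    rw [uIcc_of_le hc.1.le]; exact Icc_subset_Icc le_rfl hc.2.le)).intervalIntegrable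
  have hcy : IntervalIntegrable g volume c y := (hg.mono (by
    rw [uIcc_of_le hc.2.le]; exact Icc_subset_Icc hc.1.le le_rfl)).intervalIntegrable
  have hgc (u v : ℝ) : IntervalIntegrable (fun _ ↦ g c) volume u v := intervalIntegrable_const
  have hleft : ∫ t in x..c, |g t - g c| = ∫ t in x..c, (g c - g t) :=
    intervalIntegral.integral_congr fun t ht ↦ by
      rw [uIcc_of_le hc.1.le] at ht
      have := hg ⟨ht.1, ht.2.trans hc.2.le⟩ (Ioo_subset_Icc_self hc) ht.2
      simp only [abs_of_nonpos (sub_nonpos.2 this), neg_sub]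
  have hright : ∫ t in c..y, |g t - g c| = ∫ t in c..y, (g t - g c) :=
    intervalIntegral.integral_congr fun t ht ↦ by
      rw [uIcc_of_le hc.2.le] at ht
      have := hg (Ioo_subset_Icc_self hc) ⟨hc.1.le.trans ht.1, ht.2⟩ ht.1
      simp only [abs_of_nonneg (sub_nonneg.2 this)]
  rw [mul_oscI g hxy, ← hmean, inv_mul_cancel_left₀ (sub_pos.2 hxy).ne',
    ← intervalIntegral.integral_add_adjacent_intervals (hxc.sub (hgc x c)).abs
      (hcy.sub (hgc c y)).abs, hleft, hright, intervalIntegral.integral_sub (hgc x c) hxc,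
    intervalIntegral.integral_sub hcy (hgc c y), intervalIntegral.integral_const,
    intervalIntegral.integral_const, smul_eq_mul, smul_eq_mul]
  rw [← intervalIntegral.integral_add_adjacent_intervals hxc hcy] at hmean
  linarith

theorem oscI_lt_half_sub {m M : ℝ} (hxy : x < y) (hg : ContinuousOn g (Icc x y))
    (hbound : ∀ t ∈ Icc x y, g t ∈ Icc m M) (hmM : m < M) : oscI g x y < (M - m) / 2 := by
  have hint : IntervalIntegrable g volume x y := hg.intervalIntegrable_of_Icc hxy.le
  obtain ⟨c, hc, hmean⟩ := exists_eq_interval_average hxy.ne ((uIcc_of_le hxy.le).symm ▸ hg)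
  rw [uIoo_of_lt hxy] at hc
  rw [interval_average_eq, smul_eq_mul] at hmean
  have hcmem := hbound c (Ioo_subset_Icc_self hc)
  -- On `[m, M]` the convex function `u ↦ (M - m) * |u - g c|` lies below its chord, hence below
  -- the affine function on the right, which is strictly larger at `u = g c`.
  have hlt : ∫ t in x..y, (M - m) * |g t - g c| <
      ∫ t in x..y, ((M - m) ^ 2 / 2 + (M + m - 2 * g c) * (g t - g c)) := by
    refine intervalIntegral.integral_lt_integral_of_continuousOn_of_le_of_exists_lt hxy
      (by fun_prop) (by fun_prop) (fun t ht ↦ ?_) ⟨c, Ioo_subset_Icc_self hc, ?_⟩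
    · have htmem := hbound t (Ioc_subset_Icc_self ht)
      rcases abs_choice (g t - g c) with h | h <;> rw [h]
      · nlinarith [sq_nonneg (M + m - 2 * g c),
          mul_nonneg (sub_nonneg.2 htmem.2) (sub_nonneg.2 hcmem.1)]
      · nlinarith [sq_nonneg (M + m - 2 * g c),
          mul_nonneg (sub_nonneg.2 htmem.1) (sub_nonneg.2 hcmem.2)]
    · rw [sub_self, abs_zero, mul_zero, mul_zero, add_zero]
      have := sub_pos.2 hmM
      positivity
  have hzero : ∫ t in x..y, (g t - g c) = 0 := by
    rw [integral_sub_mean hxy hint, hmean, sub_self, mul_zero]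
  rw [intervalIntegral.integral_add intervalIntegrable_const
    ((hint.sub intervalIntegrable_const).const_mul _), intervalIntegral.integral_const,
    intervalIntegral.integral_const_mul, intervalIntegral.integral_const_mul, hzero, mul_zero,
    add_zero, smul_eq_mul, hmean, ← mul_oscI g hxy] at hlt
  have hpos : 0 < (M - m) * (y - x) := mul_pos (sub_pos.2 hmM) (sub_pos.2 hxy)
  refine lt_of_mul_lt_mul_left ?_ hpos.le
  linarith

end Oscillation

/-! ### Lipschitz regularity -/

/-- The identity `osc(f, I) = (1/4)|Df|(I)` on all intervals `I` compactly contained in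
`(a, b)`. -/
def OscIdentityOn (f : ℝ → ℝ) (a b : ℝ) : Prop :=
  ∀ x y, a < x → x < y → y < b → varD f x y = 4 * ENNReal.ofReal (oscI f x y)

namespace OscIdentityOn

variable {f g : ℝ → ℝ} {a b x y z : ℝ}

theorem mono {a' b' : ℝ} (h : OscIdentityOn f a b) (ha : a ≤ a') (hb : b' ≤ b) :
    OscIdentityOn f a' b' :=
  fun x y hx hxy hy ↦ h x y (ha.trans_lt hx) hxy (hy.trans_le hb)

theorem congr_ae (h : OscIdentityOn f a b) (hfg : ∀ᵐ t, t ∈ Ioo a b → f t = g t) :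
    OscIdentityOn g a b := fun x y hx hxy hy ↦ by
  have hfg' : ∀ᵐ t, t ∈ Ioo x y → f t = g t := by
    filter_upwards [hfg] with t ht hmem using ht (Ioo_subset_Ioo hx.le hy.le hmem)
  rw [← varD_congr_ae hxy.le hfg', ← oscI_congr_ae hxy.le hfg']
  exact h x y hx hxy hy

theorem neg (h : OscIdentityOn f a b) : OscIdentityOn (-f) a b := fun x y hx hxy hy ↦ by
  rw [varD_neg, oscI_neg]
  exact h x y hx hxy hy

theorem varD_eq (h : OscIdentityOn f a b) (hx : a < x) (hxy : x < y) (hy : y < b) :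
    varD f x y = ENNReal.ofReal (4 * oscI f x y) := by
  rw [h x y hx hxy hy, ENNReal.ofReal_mul zero_le_four, ENNReal.ofReal_ofNat]

theorem le_four_mul_oscI (h : OscIdentityOn f a b) (hx : a < x) (hxy : x < y) (hy : y < b)
    {r : ℝ} (hr : ENNReal.ofReal r ≤ varD f x y) : r ≤ 4 * oscI f x y := by
  rwa [h.varD_eq hx hxy hy,
    ENNReal.ofReal_le_ofReal_iff (mul_nonneg zero_le_four (oscI_nonneg f hxy.le))] at hr

theorem oscI_add_le (h : OscIdentityOn f a b) (hf : LocallyIntegrable f) (hx : a < x)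
    (hxy : x ≤ y) (hyz : y ≤ z) (hz : z < b) : oscI f x y + oscI f y z ≤ oscI f x z := by
  rcases hxy.eq_or_lt with rfl | hxy
  · rw [oscI_self, zero_add]
  rcases hyz.eq_or_lt with rfl | hyz
  · rw [oscI_self, add_zero]
  have hxz := hxy.trans hyz
  have hnonneg (u v : ℝ) (huv : u < v) : 0 ≤ 4 * oscI f u v :=
    mul_nonneg zero_le_four (oscI_nonneg f huv.le)
  have := varD_add_le hf hxy.le hyz.le
  rw [h.varD_eq hx hxy (hyz.trans hz), h.varD_eq (hx.trans hxy) hyz hz, h.varD_eq hx hxz hz,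
    ← ENNReal.ofReal_add (hnonneg x y hxy) (hnonneg y z hyz),
    ENNReal.ofReal_le_ofReal_iff (hnonneg x z hxz)] at this
  linarith

theorem abs_sub_le_four_mul_oscI (h : OscIdentityOn g a b) (hg : Continuous g) (hx : a < x)
    (hy : y < b) {s t : ℝ} (hs : s ∈ Icc x y) (ht : t ∈ Icc x y) :
    |g s - g t| ≤ 4 * oscI g x y := by
  rcases (hs.1.trans hs.2).eq_or_lt with rfl | hxy
  · rw [Icc_self, mem_singleton_iff] at hs ht
    rw [hs, ht, sub_self, abs_zero, oscI_self, mul_zero]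
  exact h.le_four_mul_oscI hx hxy hy (ofReal_abs_sub_le_varD hg hxy hs ht)

end OscIdentityOn

section LipschitzRepresentative

variable {f : ℝ → ℝ} {a b : ℝ}

theorem exists_lipschitzWith_ae_eq_of_ae {C : ℝ} {S s : Set ℝ} (hS : ∀ᵐ t, t ∈ S)
    (hf : ∀ u ∈ S ∩ s, ∀ v ∈ S ∩ s, u < v → |f u - f v| ≤ C * (v - u)) :
    ∃ K g, LipschitzWith K g ∧ ∀ᵐ t, t ∈ s → f t = g t := by
  have hlip : LipschitzOnWith C.toNNReal f (S ∩ s) := LipschitzOnWith.of_dist_le' fun u hu v hv ↦ by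
    rcases lt_trichotomy u v with h | rfl | h
    · rw [dist_comm u, Real.dist_eq, Real.dist_eq, abs_of_pos (sub_pos.2 h)]
      exact hf u hu v hv h
    · simp
    · rw [dist_comm, Real.dist_eq, Real.dist_eq, abs_of_pos (sub_pos.2 h)]
      exact hf v hv u hu h
  obtain ⟨g, hg, heq⟩ := hlip.extend_real
  refine ⟨_, g, hg, ?_⟩
  filter_upwards [hS] with t ht hmem using heq ⟨ht, hmem⟩

namespace OscIdentityOn

theorem exists_ae_abs_sub_le (h : OscIdentityOn f a b) (hf : LocallyIntegrable f) :
    ∃ S : Set ℝ, (∀ᵐ t, t ∈ S) ∧ ∀ x y, a < x → y < b →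
      ∀ s ∈ S ∩ Ioo x y, ∀ t ∈ S ∩ Ioo x y, |f s - f t| ≤ 4 * oscI f x y :=
  ⟨_, ae_tendsto_mollify hf, fun _ _ hx hy _ hs _ ht ↦
    h.le_four_mul_oscI hx (hs.2.1.trans hs.2.2) hy
      (ofReal_abs_sub_le_varD_of_tendsto hf hs.2 ht.2 hs.1 ht.1)⟩

theorem exists_ae_abs_le (h : OscIdentityOn f a b) (hf : LocallyIntegrable f) {p q : ℝ}
    (hap : a < p) (hpq : p < q) (hqb : q < b) : ∃ M, 0 ≤ M ∧ ∀ᵐ t, t ∈ Ioo p q → |f t| ≤ M := by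
  obtain ⟨S, hS, hle⟩ := h.exists_ae_abs_sub_le hf
  obtain ⟨s, hs, hsS⟩ : (Ioo p q ∩ S).Nonempty :=
    (Measure.dense_of_ae hS).inter_open_nonempty _ isOpen_Ioo (nonempty_Ioo.2 hpq)
  refine ⟨|f s| + 4 * oscI f p q, add_nonneg (abs_nonneg _)
    (mul_nonneg zero_le_four (oscI_nonneg f hpq.le)), ?_⟩
  filter_upwards [hS] with t ht hmem
  linarith [hle p q hap hqb t ⟨ht, hmem⟩ s ⟨hsS, hs⟩, abs_sub_abs_le_abs_sub (f t) (f s)]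

/-- By superadditivity `osc(f, (x, y)) ≤ osc(f, (p, y)) - osc(f, (p, x))`, and oscillations of
bounded functions grow at most linearly. -/
theorem oscI_le_mul_sub (h : OscIdentityOn f a b) (hf : LocallyIntegrable f)
    {M p q x y : ℝ} (hap : a < p) (hpx : p < x) (hxy : x ≤ y) (hyq : y ≤ q) (hqb : q < b)
    (hM : ∀ᵐ t, t ∈ Ioo p q → |f t| ≤ M) : oscI f x y ≤ 4 * M / (x - p) * (y - x) := by
  have hadd := h.oscI_add_le hf hap hpx.le hxy (hyq.trans_lt hqb)
  have hgrow : (y - p) * oscI f p y ≤ (x - p) * oscI f p x + 4 * M * (y - x) := by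
    refine mul_oscI_le_mul_oscI_add hpx hxy 
      (hf.integrableOn_isCompact isCompact_uIcc).intervalIntegrable ?_
    filter_upwards [hM] with t ht hmem using ht ⟨hmem.1, hmem.2.trans_le hyq⟩
  have hosc := oscI_nonneg f (hpx.le.trans hxy)
  rw [div_mul_eq_mul_div, le_div_iff₀ (sub_pos.2 hpx)]
  nlinarith

theorem exists_lipschitzWith_ae_eq_of_locallyIntegrable (h : OscIdentityOn f a b)
    (hf : LocallyIntegrable f) {p q : ℝ} (hap : a < p) (hpq : p < q) (hqb : q < b) :
    ∃ K g, LipschitzWith K g ∧ ∀ᵐ t, t ∈ Ioo p q → f t = g t := by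
  obtain ⟨a', haa', ha'p⟩ := exists_between hap
  obtain ⟨b', hqb', hb'b⟩ := exists_between hqb
  obtain ⟨S, hS, hle⟩ := h.exists_ae_abs_sub_le hf
  obtain ⟨M, hM0, hM⟩ := h.exists_ae_abs_le hf haa' (ha'p.trans (hpq.trans hqb')) hb'b
  refine exists_lipschitzWith_ae_eq_of_ae (C := 4 * (4 * M / (p - a'))) hS
    fun u hu v hv huv ↦ ?_
  have hlim : Tendsto (fun r ↦ 4 * (4 * M / (p - a')) * (v + r - (u - r))) (𝓝[>] 0)
      (𝓝 (4 * (4 * M / (p - a')) * (v - u))) :=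
    (Continuous.tendsto' (by fun_prop) _ _ (by simp)).mono_left nhdsWithin_le_nhds
  refine ge_of_tendsto hlim ?_
  filter_upwards [Ioo_mem_nhdsGT (lt_min (sub_pos.2 hu.2.1) (sub_pos.2 hv.2.2))] with r hr
  obtain ⟨hru, hrv⟩ := lt_min_iff.1 hr.2
  have hr0 := hr.1
  have hosc := h.oscI_le_mul_sub hf (x := u - r) (y := v + r) haa' (by linarith) (by linarith)
    (by linarith) hb'b hM
  have hle := hle (u - r) (v + r) (by linarith) (by linarith)
    u ⟨hu.1, by linarith, by linarith⟩ v ⟨hv.1, by linarith, by linarith⟩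
  have hC : 4 * M / (u - r - a') ≤ 4 * M / (p - a') :=
    div_le_div_of_nonneg_left (by positivity) (sub_pos.2 ha'p) (by linarith)
  linarith [mul_le_mul_of_nonneg_right hC (a := v + r - (u - r)) (by linarith)]

theorem exists_lipschitzWith_ae_eq (h : OscIdentityOn f a b)
    (hf : LocallyIntegrableOn f (Ioo a b)) {p q : ℝ} (hap : a < p) (hpq : p < q) (hqb : q < b) :
    ∃ K g, LipschitzWith K g ∧ ∀ᵐ t, t ∈ Ioo p q → f t = g t := by
  obtain ⟨a', haa', ha'p⟩ := exists_between hap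
  obtain ⟨b', hqb', hb'b⟩ := exists_between hqb
  have heq : ∀ t ∈ Ioo a' b', f t = (Icc a' b').indicator f t := fun t ht ↦
    (indicator_of_mem (Ioo_subset_Icc_self ht) f).symm
  have hint : Integrable ((Icc a' b').indicator f) :=
    (hf.integrableOn_compact_subset (Icc_subset_Ioo haa' hb'b) isCompact_Icc).integrable_indicator
      measurableSet_Icc
  obtain ⟨K, g, hg, hfg⟩ := ((h.mono haa'.le hb'b.le).congr_ae
    (Eventually.of_forall heq)).exists_lipschitzWith_ae_eq_of_locallyIntegrable
      hint.locallyIntegrable ha'p hpq hqb'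
  refine ⟨K, g, hg, ?_⟩
  filter_upwards [hfg] with t ht hmem
  rw [heq t ⟨ha'p.trans hmem.1, hmem.2.trans hqb'⟩, ht hmem]

end OscIdentityOn

end LipschitzRepresentative

/-! ### Solutions taking a value twice -/

namespace OscIdentityOn

variable {g : ℝ → ℝ} {a b x y : ℝ}

theorem two_mul_abs_sub_le (h : OscIdentityOn g a b) (hg : Continuous g) (hx : a < x) (hy : y < b)
    (hxy : g x = g y) {s t : ℝ} (hs : s ∈ Icc x y) (ht : t ∈ Icc x y) :
    2 * |g s - g t| ≤ 4 * oscI g x y := by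
  wlog hst : s ≤ t generalizing s t
  · rw [abs_sub_comm]
    exact this ht hs (le_of_not_ge hst)
  have habs {u v : ℝ} (hu : x ≤ u) (huv : u ≤ v) (hv : v ≤ y) : |g u - g v| ≤ 4 * oscI g u v :=
    h.abs_sub_le_four_mul_oscI hg (hx.trans_le hu) (hv.trans_lt hy) (left_mem_Icc.2 huv)
      (right_mem_Icc.2 huv)
  have hadd := h.oscI_add_le hg.locallyIntegrable hx hs.1 hst (ht.2.trans_lt hy)
  have hadd' := h.oscI_add_le hg.locallyIntegrable hx ht.1 ht.2 hy
  have htri : |g s - g t| ≤ |g x - g s| + |g t - g y| := by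
    rw [hxy, abs_sub_comm, add_comm]
    exact abs_sub_le (g t) (g y) (g s)
  linarith [habs le_rfl hs.1 hs.2, habs hs.1 hst ht.2, habs ht.1 ht.2 le_rfl]

theorem eq_of_mem_Icc (h : OscIdentityOn g a b) (hg : Continuous g) (hx : a < x) (hxy : x < y)
    (hy : y < b) (heq : g x = g y) : ∀ t ∈ Icc x y, g t = g x := by
  have hne : (Icc x y).Nonempty := nonempty_Icc.2 hxy.le
  obtain ⟨u, hu, hmax⟩ := isCompact_Icc.exists_isMaxOn hne hg.continuousOn
  obtain ⟨v, hv, hmin⟩ := isCompact_Icc.exists_isMinOn hne hg.continuousOn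
  have hle : g u ≤ g v := by
    by_contra! hlt
    have hosc := oscI_lt_half_sub hxy hg.continuousOn (fun t ht ↦ ⟨hmin ht, hmax ht⟩) hlt
    linarith [h.two_mul_abs_sub_le hg hx hy heq hu hv, le_abs_self (g u - g v)]
  exact fun t ht ↦ le_antisymm
    ((hmax ht).trans (hle.trans (hmin (left_mem_Icc.2 hxy.le))))
    ((hmax (left_mem_Icc.2 hxy.le)).trans (hle.trans (hmin ht)))

variable {k : ℝ}

/-- If `R` is the maximal deviation from `k` on the larger interval, then
`R ≤ 4 * osc ≤ 8 * mean |g - k|`, and the mean is less than `R / 8`. -/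
theorem eq_const_of_subinterval (h : OscIdentityOn g a b) (hg : Continuous g) {x' y' : ℝ}
    (hx' : a < x') (hxx' : x' ≤ x) (hxy : x < y) (hyy' : y ≤ y') (hy' : y' < b)
    (hlen : 7 * (y' - x') < 8 * (y - x)) (hk : ∀ t ∈ Icc x y, g t = k) :
    ∀ t ∈ Icc x' y', g t = k := by
  have hxy' : x' < y' := by linarith
  obtain ⟨u, hu, hmax⟩ := isCompact_Icc.exists_isMaxOn (nonempty_Icc.2 hxy'.le)
    (show Continuous fun t ↦ |g t - k| by fun_prop).continuousOn
  set R := |g u - k|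
  have hint (s t : ℝ) : IntervalIntegrable (fun t ↦ |g t - k|) volume s t :=
    Continuous.intervalIntegrable (by fun_prop) s t
  have hpart {s t : ℝ} (hs : x' ≤ s) (hst : s ≤ t) (ht : t ≤ y') :
      ∫ τ in s..t, |g τ - k| ≤ R * (t - s) := by
    refine (intervalIntegral.integral_mono_on (g := fun _ ↦ R) hst (hint s t)
      intervalIntegrable_const fun τ hτ ↦ hmax ⟨hs.trans hτ.1, hτ.2.trans ht⟩).trans_eq ?_
    rw [intervalIntegral.integral_const, smul_eq_mul, mul_comm]
  have hflat : ∫ τ in x..y, |g τ - k| = 0 :=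
    intervalIntegral.integral_zero_ae (Eventually.of_forall fun τ hτ ↦ by
      rw [uIoc_of_le hxy.le] at hτ
      rw [hk τ (Ioc_subset_Icc_self hτ), sub_self, abs_zero])
  have hmean := mul_oscI_le_two_mul hxy' (hg.intervalIntegrable x' y') k
  rw [← intervalIntegral.integral_add_adjacent_intervals (hint x' x) (hint x y'),
    ← intervalIntegral.integral_add_adjacent_intervals (hint x y) (hint y y'), hflat] at hmean
  have hR := h.abs_sub_le_four_mul_oscI hg hx' hy' hu ⟨hxx', hxy.le.trans hyy'⟩
  rw [hk x (left_mem_Icc.2 hxy.le)] at hR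
  have hR0 : R ≤ 0 := by
    by_contra! hpos
    nlinarith [hpart le_rfl hxx' (hxy.le.trans hyy'), hpart (hxx'.trans hxy.le) hyy' le_rfl,
      mul_le_mul_of_nonneg_left hR (sub_pos.2 hxy').le, mul_lt_mul_of_pos_left hlen hpos]
  exact fun t ht ↦ sub_eq_zero.1 (abs_nonpos_iff.1 ((hmax ht).trans hR0))

theorem eq_const_of_eq_const_Icc (h : OscIdentityOn g a b) (hg : Continuous g)
    (hx : a < x) (hxy : x < y) (hy : y < b) (hk : ∀ t ∈ Icc x y, g t = k) :
    ∀ t ∈ Ioo a b, g t = k := by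
  intro t ht
  obtain ⟨x', hax', hx'⟩ := exists_between (lt_min hx ht.1)
  obtain ⟨y', hy', hy'b⟩ := exists_between (max_lt hy ht.2)
  obtain ⟨hx'x, hx't⟩ := lt_min_iff.1 hx'
  obtain ⟨hyy', hty'⟩ := max_lt_iff.1 hy'
  obtain ⟨N, hN⟩ := exists_nat_gt (7 * ((y' - x') - (y - x)) / (y - x))
  rw [div_lt_iff₀ (sub_pos.2 hxy)] at hN
  have hN0 : (0 : ℝ) < N := by
    by_contra! hle
    nlinarith
  -- The flat interval grows in `N` steps of equal size from `[x, y]` to `[x', y']`.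
  have hgrow (n : ℕ) (hn : n ≤ N) :
      ∀ τ ∈ Icc (x - n / N * (x - x')) (y + n / N * (y' - y)), g τ = k := by
    induction n with
    | zero => simpa using hk
    | succ n ih =>
      have hr0 : (0 : ℝ) ≤ n / N := by positivity
      have hN1 : ((n + 1 : ℕ) : ℝ) / N ≤ 1 := (div_le_one hN0).2 (by exact_mod_cast hn)
      have hsucc : ((n + 1 : ℕ) : ℝ) / N = n / N + (N : ℝ)⁻¹ := by
        push_cast
        ring
      have hinv : 0 < (N : ℝ)⁻¹ := inv_pos.2 hN0
      have hstep : 7 * ((y' - x') - (y - x)) * (N : ℝ)⁻¹ < y - x := by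
        rwa [← div_eq_mul_inv, div_lt_iff₀ hN0, mul_comm (y - x)]
      rw [hsucc] at hN1 ⊢
      refine h.eq_const_of_subinterval hg ?_ ?_ ?_ ?_ ?_ ?_ (ih (by omega)) <;> nlinarith
  have hfull := hgrow N le_rfl t
  rw [div_self hN0.ne', one_mul, one_mul, sub_sub_cancel, add_sub_cancel] at hfull
  exact hfull ⟨hx't.le, hty'.le⟩

theorem eq_const_of_not_injOn (h : OscIdentityOn g a b) (hg : Continuous g)
    (hinj : ¬ InjOn g (Ioo a b)) : ∃ k, ∀ t ∈ Ioo a b, g t = k := by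
  simp only [InjOn, not_forall] at hinj
  obtain ⟨x, hx, y, hy, heq, hne⟩ := hinj
  wlog hxy : x < y generalizing x y
  · exact this y hy x hx heq.symm (Ne.symm hne) (lt_of_le_of_ne (not_lt.1 hxy) (Ne.symm hne))
  exact ⟨g x, h.eq_const_of_eq_const_Icc hg hx.1 hxy hy.2
    (h.eq_of_mem_Icc hg hx.1 hxy hy.2 heq)⟩

end OscIdentityOn

/-! ### Smoothness of monotone solutions -/

section StrictMonotonePrimitive

theorem tendsto_nhds_of_strictMonoOn {ι α β : Type*} [LinearOrder α] [TopologicalSpace α]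
    [OrderTopology α] [DenselyOrdered α] [NoMinOrder α] [NoMaxOrder α] [LinearOrder β]
    [TopologicalSpace β] [OrderTopology β] {l : Filter ι} {c : ι → α} {g : α → β} {s : Set α}
    {y : α} (hg : StrictMonoOn g s) (hs : s ∈ 𝓝 y) (hc : ∀ᶠ z in l, c z ∈ s)
    (h : Tendsto (g ∘ c) l (𝓝 (g y))) : Tendsto c l (𝓝 y) := by
  have hy := mem_of_mem_nhds hs
  refine tendsto_order.2 ⟨fun u hu ↦ ?_, fun u hu ↦ ?_⟩
  · obtain ⟨v, hvs, huv, hvy⟩ :=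
      Filter.nonempty_of_mem (inter_mem (nhdsWithin_le_nhds hs) (Ioo_mem_nhdsLT hu))
    filter_upwards [hc, h.eventually (lt_mem_nhds (hg hvs hy hvy))] with z hz hvz
    exact huv.trans ((hg.lt_iff_lt hvs hz).1 hvz)
  · obtain ⟨v, hvs, hyv, hvu⟩ :=
      Filter.nonempty_of_mem (inter_mem (nhdsWithin_le_nhds hs) (Ioo_mem_nhdsGT hu))
    filter_upwards [hc, h.eventually (gt_mem_nhds (hg hy hvs hyv))] with z hz hzv
    exact ((hg.lt_iff_lt hz hvs).1 hzv).trans hvu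

theorem hasDerivAt_slope {F : ℝ → ℝ} {F' x y : ℝ} (hF : HasDerivAt F F' y) (hxy : x ≠ y) :
    HasDerivAt (slope F x) ((F' - slope F x y) / (y - x)) y := by
  have hne : y - x ≠ 0 := sub_ne_zero.2 hxy.symm
  rw [slope_fun_def_field]
  refine ((hF.sub_const (F x)).fun_div ((hasDerivAt_id' y).sub_const x) hne).congr_deriv ?_
  field_simp

theorem mul_sub_le_sub_of_convexOn {F : ℝ → ℝ} {F' u v : ℝ} {s : Set ℝ} (hF : ConvexOn ℝ s F)
    (hu : u ∈ s) (hv : v ∈ s) (hF' : HasDerivAt F F' u) : F' * (v - u) ≤ F v - F u := by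
  rcases lt_trichotomy u v with huv | rfl | hvu
  · have := hF.le_slope_of_hasDerivAt hu hv huv hF'
    rwa [slope_def_field, le_div_iff₀ (sub_pos.2 huv)] at this
  · rw [sub_self, sub_self, mul_zero]
  · have := hF.slope_le_of_hasDerivAt hv hu hvu hF'
    rw [slope_def_field, div_le_iff₀ (sub_pos.2 hvu)] at this
    linarith

/-- The envelope theorem for the Legendre transform of `F`: the two tangent inequalities at `c y`
and `c z` bound the remainder by `(m z - m y) * (c z - c y)`, so `c` need not be differentiable. -/
theorem hasDerivAt_mul_sub_of_convexOn {F m c : ℝ → ℝ} {s : Set ℝ} {m' y : ℝ}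
    (hF : ConvexOn ℝ s F) (hs : ∀ᶠ z in 𝓝 y, c z ∈ s)
    (hFc : ∀ᶠ z in 𝓝 y, HasDerivAt F (m z) (c z)) (hm : HasDerivAt m m' y)
    (hc : ContinuousAt c y) : HasDerivAt (fun z ↦ m z * c z - F (c z)) (m' * c y) y := by
  have hsmall : (fun z ↦ (m z - m y) * (c z - c y)) =o[𝓝 y] fun z ↦ z - y := by
    have hc0 : (fun z ↦ c z - c y) =o[𝓝 y] fun _ ↦ (1 : ℝ) :=
      (Asymptotics.isLittleO_one_iff ℝ).2 (tendsto_sub_nhds_zero_iff.2 hc)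
    simpa only [mul_one] using hm.isBigO_sub.mul_isLittleO hc0
  have hrem : (fun z ↦ m z * c z - F (c z) - (m y * c y - F (c y)) - (m z - m y) * c y)
      =O[𝓝 y] fun z ↦ (m z - m y) * (c z - c y) := by
    refine .of_bound' ?_
    filter_upwards [hs, hFc] with z hz hFz
    have hy := mul_sub_le_sub_of_convexOn hF hs.self_of_nhds hz hFc.self_of_nhds
    have hz := mul_sub_le_sub_of_convexOn hF hz hs.self_of_nhds hFz
    refine abs_le_abs_of_nonneg ?_ ?_ <;> linarith
  rw [hasDerivAt_iff_isLittleO]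
  refine ((hrem.trans_isLittleO hsmall).add (hm.isLittleO.const_mul_left (c y))).congr_left
    fun z ↦ ?_
  rw [smul_eq_mul, smul_eq_mul]
  ring

theorem contDiffAt_of_comp {n : WithTop ℕ∞} {g c : ℝ → ℝ} {g' y : ℝ} (hn : n ≠ 0)
    (hg : ContDiffAt ℝ n g (c y)) (hg' : HasDerivAt g g' (c y)) (hg'0 : g' ≠ 0)
    (hc : ContinuousAt c y) (hgc : ContDiffAt ℝ n (g ∘ c) y) : ContDiffAt ℝ n c y := by
  have hequiv := hg'.hasFDerivAt_equiv hg'0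
  have hleft : ∀ᶠ z in 𝓝 (c y), hg.localInverse hequiv hn (g z) = z :=
    (hg.hasStrictFDerivAt' hequiv hn).eventually_left_inverse
  exact ((hg.to_localInverse hequiv hn).comp y hgc).congr_of_eventuallyEq
    ((hc.eventually hleft).mono fun z hz ↦ hz.symm)

end StrictMonotonePrimitive

/-- A strictly increasing solution `g` of the oscillation identity on `(p, q)`, together with an
antiderivative `F`. If `g c` is the mean of `g` over `(x, y)`, then `|Dg|(x, y) = g y - g x` and
`osc(g, (x, y)) = 2 / (y - x) * ∫ₓᶜ (g c - g)`, which is what `osc_identity` relates. -/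
structure IsMonotoneSolution (g F : ℝ → ℝ) (p q : ℝ) : Prop where
  hasDerivAt_antideriv : ∀ t ∈ Ioo p q, HasDerivAt F (g t) t
  strictMonoOn : StrictMonoOn g (Ioo p q)
  osc_identity : ∀ x y c, p < x → x < c → c < y → y < q → g c * (y - x) = F y - F x →
    (y - x) * (g y - g x) = 8 * (g c * (c - x) - (F c - F x))

/-- The point of `(x, y)` at which `g` attains its mean over `(x, y)`, where `F' = g`; it is unique
when `g` is strictly monotone. -/
noncomputable def meanPoint (g F : ℝ → ℝ) (x y : ℝ) : ℝ :=
  Function.invFunOn g (Ioo x y) (slope F x y)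

namespace IsMonotoneSolution

variable {g F : ℝ → ℝ} {p q x y : ℝ}

theorem mono {p' q' : ℝ} (h : IsMonotoneSolution g F p q) (hp : p ≤ p') (hq : q' ≤ q) :
    IsMonotoneSolution g F p' q' where
  hasDerivAt_antideriv t ht := h.hasDerivAt_antideriv t (Ioo_subset_Ioo hp hq ht)
  strictMonoOn := h.strictMonoOn.mono (Ioo_subset_Ioo hp hq)
  osc_identity x y c hx hxc hcy hy :=
    h.osc_identity x y c (hp.trans_lt hx) hxc hcy (hy.trans_le hq)

theorem exists_mem_Ioo_eq_slope (h : IsMonotoneSolution g F p q) (hx : p < x) (hxy : x < y)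
    (hy : y < q) : ∃ c ∈ Ioo x y, g c = slope F x y := by
  have hF (t : ℝ) (ht : t ∈ Icc x y) : HasDerivAt F (g t) t :=
    h.hasDerivAt_antideriv t (Icc_subset_Ioo hx hy ht)
  rw [slope_def_field]
  exact exists_hasDerivAt_eq_slope F g hxy
    (fun t ht ↦ (hF t ht).continuousAt.continuousWithinAt)
    fun t ht ↦ hF t (Ioo_subset_Icc_self ht)

theorem meanPoint_mem (h : IsMonotoneSolution g F p q) (hx : p < x) (hxy : x < y) (hy : y < q) :
    meanPoint g F x y ∈ Ioo x y :=
  Function.invFunOn_mem (h.exists_mem_Ioo_eq_slope hx hxy hy)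

theorem apply_meanPoint (h : IsMonotoneSolution g F p q) (hx : p < x) (hxy : x < y) (hy : y < q) :
    g (meanPoint g F x y) = slope F x y :=
  Function.invFunOn_eq (h.exists_mem_Ioo_eq_slope hx hxy hy)

theorem meanPoint_mem_Ioo (h : IsMonotoneSolution g F p q) (hx : p < x) (hy : y ∈ Ioo x q) :
    meanPoint g F x y ∈ Ioo p q :=
  Ioo_subset_Ioo hx.le hy.2.le (h.meanPoint_mem hx hy.1 hy.2)

theorem comp_meanPoint_eventuallyEq (h : IsMonotoneSolution g F p q) (hx : p < x)
    (hy : y ∈ Ioo x q) : g ∘ meanPoint g F x =ᶠ[𝓝 y] slope F x := by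
  filter_upwards [isOpen_Ioo.mem_nhds hy] with z hz using h.apply_meanPoint hx hz.1 hz.2

theorem hasDerivAt_slope_antideriv (h : IsMonotoneSolution g F p q) (hx : p < x)
    (hy : y ∈ Ioo x q) : HasDerivAt (slope F x) ((g y - slope F x y) / (y - x)) y :=
  hasDerivAt_slope (h.hasDerivAt_antideriv y ⟨hx.trans hy.1, hy.2⟩) hy.1.ne

theorem continuousAt_meanPoint (h : IsMonotoneSolution g F p q) (hx : p < x) (hy : y ∈ Ioo x q) :
    ContinuousAt (meanPoint g F x) y := by
  refine tendsto_nhds_of_strictMonoOn h.strictMonoOn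
    (isOpen_Ioo.mem_nhds (h.meanPoint_mem_Ioo hx hy)) ?_ ?_
  · filter_upwards [isOpen_Ioo.mem_nhds hy] with z hz using h.meanPoint_mem_Ioo hx hz
  · rw [h.apply_meanPoint hx hy.1 hy.2]
    exact (h.hasDerivAt_slope_antideriv hx hy).continuousAt.tendsto.congr'
      (h.comp_meanPoint_eventuallyEq hx hy).symm

theorem convexOn_antideriv (h : IsMonotoneSolution g F p q) : ConvexOn ℝ (Ioo p q) F := by
  have hderiv : EqOn (deriv F) g (Ioo p q) := fun t ht ↦ (h.hasDerivAt_antideriv t ht).deriv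
  have hdiff : DifferentiableOn ℝ F (Ioo p q) := fun t ht ↦
    (h.hasDerivAt_antideriv t ht).differentiableAt.differentiableWithinAt
  rw [← interior_Ioo] at hderiv
  refine MonotoneOn.convexOn_of_deriv (convex_Ioo p q) hdiff.continuousOn
    (hdiff.mono interior_subset) ?_
  rw [hderiv.congr_monotoneOn, interior_Ioo]
  exact h.strictMonoOn.monotoneOn

theorem eq_add_div (h : IsMonotoneSolution g F p q) (hx : p < x) (hy : y ∈ Ioo x q) :
    g y = g x + 8 * (slope F x y * meanPoint g F x y - F (meanPoint g F x y) -
      (slope F x y * x - F x)) / (y - x) := by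
  have hne : y - x ≠ 0 := sub_ne_zero.2 hy.1.ne'
  have hmem := h.meanPoint_mem hx hy.1 hy.2
  have hmean := h.apply_meanPoint hx hy.1 hy.2
  have hosc := h.osc_identity x y _ hx hmem.1 hmem.2 hy.2
    (by rw [hmean, slope_def_field, div_mul_cancel₀ _ hne])
  rw [hmean] at hosc
  rw [← sub_eq_iff_eq_add', eq_div_iff hne]
  linarith

/-- The osc identity expresses `g` through the Legendre transform of `F`, which is differentiable
by the envelope theorem although `g` is only known to be monotone. -/
theorem hasDerivAt (h : IsMonotoneSolution g F p q) (hx : p < x) (hy : y ∈ Ioo x q) :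
    HasDerivAt g ((8 * ((g y - slope F x y) / (y - x) * (meanPoint g F x y - x)) - (g y - g x)) /
      (y - x)) y := by
  have hne : y - x ≠ 0 := sub_ne_zero.2 hy.1.ne'
  have hm := h.hasDerivAt_slope_antideriv hx hy
  have hlegendre := hasDerivAt_mul_sub_of_convexOn h.convexOn_antideriv
    (by filter_upwards [isOpen_Ioo.mem_nhds hy] with z hz using h.meanPoint_mem_Ioo hx hz)
    (by
      filter_upwards [isOpen_Ioo.mem_nhds hy] with z hz
      rw [← h.apply_meanPoint hx hz.1 hz.2]
      exact h.hasDerivAt_antideriv _ (h.meanPoint_mem_Ioo hx hz))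
    hm (h.continuousAt_meanPoint hx hy)
  refine ((((hlegendre.fun_sub ((hm.mul_const x).sub_const (F x))).const_mul 8).fun_div
    ((hasDerivAt_id' y).sub_const x) hne).const_add (g x)).congr_of_eventuallyEq ?_
    |>.congr_deriv ?_
  · filter_upwards [isOpen_Ioo.mem_nhds hy] with z hz using h.eq_add_div hx hz
  · have hg := h.eq_add_div hx hy
    rw [← sub_eq_iff_eq_add', eq_div_iff hne] at hg
    field_simp
    linear_combination hg

theorem differentiableOn (h : IsMonotoneSolution g F p q) : DifferentiableOn ℝ g (Ioo p q) := by
  intro y hy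
  obtain ⟨x, hpx, hxy⟩ := exists_between hy.1
  exact (h.hasDerivAt hpx ⟨hxy, hy.2⟩).differentiableAt.differentiableWithinAt

theorem contDiffAt_antideriv {n : ℕ} (h : IsMonotoneSolution g F p q)
    (hg : ContDiffOn ℝ n g (Ioo p q)) (hy : y ∈ Ioo p q) : ContDiffAt ℝ n F y := by
  have hF : ContDiffOn ℝ (n + 1) F (Ioo p q) := by
    rw [contDiffOn_succ_iff_deriv_of_isOpen isOpen_Ioo]
    exact ⟨fun t ht ↦ (h.hasDerivAt_antideriv t ht).differentiableAt.differentiableWithinAt,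
      fun hn ↦ absurd hn (by simp), hg.congr fun t ht ↦ (h.hasDerivAt_antideriv t ht).deriv⟩
  exact (hF.contDiffAt (isOpen_Ioo.mem_nhds hy)).of_le le_self_add

theorem contDiffAt_slope {n : ℕ} (h : IsMonotoneSolution g F p q)
    (hg : ContDiffOn ℝ n g (Ioo p q)) (hx : p < x) (hy : y ∈ Ioo x q) :
    ContDiffAt ℝ n (slope F x) y := by
  rw [slope_fun_def_field]
  exact ((h.contDiffAt_antideriv hg ⟨hx.trans hy.1, hy.2⟩).sub contDiffAt_const).fun_div
    (contDiffAt_id.sub contDiffAt_const) (sub_ne_zero.2 hy.1.ne')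

theorem contDiffOn_succ {n : ℕ} (h : IsMonotoneSolution g F p q)
    (hg : ContDiffOn ℝ n g (Ioo p q))
    (hc : ∀ x y, p < x → y ∈ Ioo x q → ContDiffAt ℝ n (meanPoint g F x) y) :
    ContDiffOn ℝ (n + 1) g (Ioo p q) := by
  rw [contDiffOn_succ_iff_deriv_of_isOpen isOpen_Ioo]
  refine ⟨h.differentiableOn, fun hn ↦ absurd hn (by simp), fun y hy ↦ ?_⟩
  obtain ⟨x, hpx, hxy⟩ := exists_between hy.1
  have hyx : y ∈ Ioo x q := ⟨hxy, hy.2⟩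
  have hne : y - x ≠ 0 := sub_ne_zero.2 hxy.ne'
  have hgy : ContDiffAt ℝ n g y := hg.contDiffAt (isOpen_Ioo.mem_nhds hy)
  have hm : ContDiffAt ℝ n (slope F x) y := h.contDiffAt_slope hg hpx hyx
  have hcy : ContDiffAt ℝ n (meanPoint g F x) y := hc x y hpx hyx
  have hformula : ContDiffAt ℝ n (fun z ↦ (8 * ((g z - slope F x z) / (z - x) *
      (meanPoint g F x z - x)) - (g z - g x)) / (z - x)) y := by
    fun_prop (disch := assumption)
  refine (hformula.congr_of_eventuallyEq ?_).contDiffWithinAt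
  filter_upwards [isOpen_Ioo.mem_nhds hyx] with z hz using (h.hasDerivAt hpx hz).deriv

theorem contDiffOn_one (h : IsMonotoneSolution g F p q) : ContDiffOn ℝ 1 g (Ioo p q) := by
  have hg : ContDiffOn ℝ (0 : ℕ) g (Ioo p q) := contDiffOn_zero.2 h.differentiableOn.continuousOn
  simpa using h.contDiffOn_succ hg fun x y hx hy ↦ contDiffAt_zero.2
    ⟨Ioo x q, isOpen_Ioo.mem_nhds hy, fun z hz ↦
      (h.continuousAt_meanPoint hx hz).continuousWithinAt⟩

theorem hasDerivAt_deriv (h : IsMonotoneSolution g F p q) (hy : y ∈ Ioo p q) :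
    HasDerivAt g (deriv g y) y :=
  (h.differentiableOn.differentiableAt (isOpen_Ioo.mem_nhds hy)).hasDerivAt

theorem contDiffOn_of_deriv_ne_zero (h : IsMonotoneSolution g F p q)
    (hg' : ∀ t ∈ Ioo p q, deriv g t ≠ 0) (n : ℕ) : ContDiffOn ℝ (n + 1) g (Ioo p q) := by
  induction n with
  | zero => simpa using h.contDiffOn_one
  | succ n ih =>
    push_cast
    norm_cast at ih ⊢
    refine h.contDiffOn_succ ih fun x y hx hy ↦ ?_
    have hmem := h.meanPoint_mem_Ioo hx hy
    exact contDiffAt_of_comp (by simp) (ih.contDiffAt (isOpen_Ioo.mem_nhds hmem))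
      (h.hasDerivAt_deriv hmem) (hg' _ hmem) (h.continuousAt_meanPoint hx hy)
      ((h.contDiffAt_slope ih hx hy).congr_of_eventuallyEq (h.comp_meanPoint_eventuallyEq hx hy))

end IsMonotoneSolution

/-! ### The fourth-order expansion -/

section TaylorExpansion

variable {f : ℝ → ℝ} {t : ℝ}

theorem isLittleO_sub_taylor {n : ℕ} (hf : ContDiffAt ℝ n f t) :
    (fun h ↦ f (t + h) - ∑ k ∈ Finset.range (n + 1), iteratedDeriv k f t / k.factorial * h ^ k)
      =o[𝓝 0] fun h ↦ h ^ n := by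
  obtain ⟨u, hu, hfu⟩ := hf.contDiffOn le_rfl (by simp)
  obtain ⟨ε, hε, hball⟩ := Metric.mem_nhds_iff.1 hu
  have ht : t ∈ Metric.ball t ε := Metric.mem_ball_self hε
  have htaylor := taylor_isLittleO (convex_ball t ε) ht (hfu.mono hball)
  rw [Metric.isOpen_ball.nhdsWithin_eq ht] at htaylor
  have hshift : Tendsto (fun h ↦ t + h) (𝓝 0) (𝓝 t) :=
    Continuous.tendsto' (by fun_prop) 0 t (add_zero t)
  refine (htaylor.comp_tendsto hshift).congr (fun h ↦ ?_) fun h ↦ by simp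
  simp only [Function.comp_apply, taylor_within_apply, add_sub_cancel_left, smul_eq_mul,
    iteratedDerivWithin_of_isOpen Metric.isOpen_ball ht]
  congr 1
  exact Finset.sum_congr rfl fun k _ ↦ by ring

theorem isLittleO_neg_sub_taylor {n : ℕ} (hf : ContDiffAt ℝ n f t) :
    (fun h ↦ f (t - h) - ∑ k ∈ Finset.range (n + 1), iteratedDeriv k f t / k.factorial * (-h) ^ k)
      =o[𝓝 0] fun h ↦ h ^ n := by
  have hneg : Tendsto (fun h : ℝ ↦ -h) (𝓝 0) (𝓝 0) :=
    Continuous.tendsto' continuous_neg 0 0 neg_zero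
  exact ((isLittleO_sub_taylor hf).comp_tendsto hneg).trans_isBigO (.of_bound' (by simp))

theorem tendsto_symm_sub_div_pow_three (hf : ContDiffAt ℝ 3 f t) :
    Tendsto (fun h ↦ (f (t + h) - f (t - h) - 2 * h * deriv f t) / h ^ 3) (𝓝[≠] 0)
      (𝓝 (iteratedDeriv 3 f t / 3)) := by
  have hsub := ((isLittleO_sub_taylor (n := 3) hf).sub (isLittleO_neg_sub_taylor hf)).mono
    (nhdsWithin_le_nhds (s := {0}ᶜ))
  refine tendsto_sub_nhds_zero_iff.1 (hsub.tendsto_div_nhds_zero.congr' ?_)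
  filter_upwards [self_mem_nhdsWithin] with h hh
  rw [mem_compl_singleton_iff] at hh
  simp only [Finset.sum_range_succ, Finset.sum_range_zero, Nat.factorial, iteratedDeriv_zero,
    iteratedDeriv_one]
  push_cast
  field_simp
  ring

theorem tendsto_symm_add_div_pow_four (hf : ContDiffAt ℝ 4 f t) :
    Tendsto (fun h ↦ (f (t + h) + f (t - h) - 2 * f t - iteratedDeriv 2 f t * h ^ 2) / h ^ 4)
      (𝓝[≠] 0) (𝓝 (iteratedDeriv 4 f t / 12)) := by
  have hadd := ((isLittleO_sub_taylor (n := 4) hf).add (isLittleO_neg_sub_taylor hf)).mono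
    (nhdsWithin_le_nhds (s := {0}ᶜ))
  refine tendsto_sub_nhds_zero_iff.1 (hadd.tendsto_div_nhds_zero.congr' ?_)
  filter_upwards [self_mem_nhdsWithin] with h hh
  rw [mem_compl_singleton_iff] at hh
  simp only [Finset.sum_range_succ, Finset.sum_range_zero, Nat.factorial, iteratedDeriv_zero,
    iteratedDeriv_one]
  push_cast
  field_simp
  ring

theorem tendsto_symm_deriv_sub_div_pow_four (hf : ContDiffAt ℝ 4 f t) :
    Tendsto (fun h ↦ (2 * h * (deriv f (t + h) - deriv f (t - h)) -
      4 * (f (t + h) + f (t - h) - 2 * f t)) / h ^ 4) (𝓝[≠] 0) (𝓝 (iteratedDeriv 4 f t / 3)) := by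
  have hderiv := tendsto_symm_sub_div_pow_three (hf.derivWithin (m := 3) (by norm_num))
  rw [← iteratedDeriv_succ'] at hderiv
  have hlim := (hderiv.const_mul 2).sub ((tendsto_symm_add_div_pow_four hf).const_mul 4)
  rw [show iteratedDeriv 4 f t / 3 = 2 * (iteratedDeriv 4 f t / 3) - 4 * (iteratedDeriv 4 f t / 12)
    by ring]
  refine hlim.congr' ?_
  filter_upwards [self_mem_nhdsWithin] with h hh
  rw [mem_compl_singleton_iff] at hh
  rw [iteratedDeriv_succ, iteratedDeriv_one]
  field_simp
  ring

theorem isLittleO_deriv_mul_sub (hf : ContDiffAt ℝ 2 f t) :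
    (fun h ↦ deriv f (t + h) * h - (f (t + h) - f t) - iteratedDeriv 2 f t / 2 * h ^ 2)
      =o[𝓝 0] fun h ↦ h ^ 2 := by
  have hf' := (isLittleO_sub_taylor (n := 1) (hf.derivWithin (m := 1) (by norm_num))).mul_isBigO
    (Asymptotics.isBigO_refl (fun h : ℝ ↦ h) _)
  simp only [pow_one, ← sq] at hf'
  refine (hf'.sub (isLittleO_sub_taylor (n := 2) hf)).congr_left fun h ↦ ?_
  simp only [Finset.sum_range_succ, Finset.sum_range_zero, Nat.factorial, iteratedDeriv_zero,
    iteratedDeriv_succ]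
  push_cast
  ring

theorem tendsto_div_of_tendsto_sub_div {ι : Type*} {l : Filter ι} {δ k : ι → ℝ} {f' L : ℝ}
    (hf : HasDerivAt f f' t) (hf' : f' ≠ 0) (hδ : Tendsto δ l (𝓝 0))
    (h : Tendsto (fun i ↦ (f (t + δ i) - f t) / k i) l (𝓝 L)) :
    Tendsto (fun i ↦ δ i / k i) l (𝓝 (L / f')) := by
  have hshift : Tendsto (fun i ↦ t + δ i) l (𝓝 t) := by simpa using hδ.const_add t
  have hdslope : Tendsto (dslope f t) (𝓝 t) (𝓝 f') := by
    have := (continuousAt_dslope_same.2 hf.differentiableAt).tendsto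
    rwa [dslope_same, hf.deriv] at this
  have hquot : Tendsto (fun i ↦ dslope f t (t + δ i)) l (𝓝 f') := hdslope.comp hshift
  refine (h.div hquot hf').congr' ?_
  filter_upwards [hquot.eventually_ne hf'] with i hi
  have := sub_smul_dslope f t (t + δ i)
  rw [add_sub_cancel_left, smul_eq_mul] at this
  simp only [Pi.div_apply]
  rw [← this]
  field_simp

theorem eventually_lt_sub_and_add_lt {p q : ℝ} (ht : t ∈ Ioo p q) :
    ∀ᶠ r in 𝓝[>] (0 : ℝ), p < t - r ∧ t - r < t + r ∧ t + r < q := by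
  filter_upwards [self_mem_nhdsWithin, Ioo_mem_nhdsGT (sub_pos.2 ht.1),
    Ioo_mem_nhdsGT (sub_pos.2 ht.2)] with r (hr : 0 < r) hrp hrq
  exact ⟨by linarith [hrp.2], by linarith, by linarith [hrq.2]⟩

end TaylorExpansion

namespace IsMonotoneSolution

variable {g F : ℝ → ℝ} {p q t : ℝ}

theorem deriv_antideriv_eventuallyEq (h : IsMonotoneSolution g F p q) (ht : t ∈ Ioo p q) :
    deriv F =ᶠ[𝓝 t] g := by
  filter_upwards [isOpen_Ioo.mem_nhds ht] with s hs using (h.hasDerivAt_antideriv s hs).deriv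

theorem tendsto_meanPoint_symm_sub (h : IsMonotoneSolution g F p q) (ht : t ∈ Ioo p q) :
    Tendsto (fun r ↦ meanPoint g F (t - r) (t + r) - t) (𝓝[>] 0) (𝓝 0) := by
  refine squeeze_zero_norm' ?_ (tendsto_id.mono_left nhdsWithin_le_nhds)
  filter_upwards [eventually_lt_sub_and_add_lt ht] with r hr
  have hmem := h.meanPoint_mem hr.1 hr.2.1 hr.2.2
  exact abs_le.2 ⟨by simp only [id]; linarith [hmem.1], by simp only [id]; linarith [hmem.2]⟩

theorem tendsto_meanPoint_symm_sub_div_sq (h : IsMonotoneSolution g F p q) (ht : t ∈ Ioo p q)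
    (hF : ContDiffAt ℝ 3 F t) (hg : HasDerivAt g (iteratedDeriv 2 F t) t)
    (hF2 : iteratedDeriv 2 F t ≠ 0) :
    Tendsto (fun r ↦ (meanPoint g F (t - r) (t + r) - t) / r ^ 2) (𝓝[>] 0)
      (𝓝 (iteratedDeriv 3 F t / 6 / iteratedDeriv 2 F t)) := by
  refine tendsto_div_of_tendsto_sub_div hg hF2 (h.tendsto_meanPoint_symm_sub ht) ?_
  have hlim := ((tendsto_symm_sub_div_pow_three hF).div_const 2).mono_left
    (nhdsGT_le_nhdsNE (0 : ℝ))
  rw [show iteratedDeriv 3 F t / 6 = iteratedDeriv 3 F t / 3 / 2 by ring]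
  refine hlim.congr' ?_
  filter_upwards [eventually_lt_sub_and_add_lt ht, self_mem_nhdsWithin] with r hr (hr0 : 0 < r)
  rw [add_sub_cancel, h.apply_meanPoint hr.1 hr.2.1 hr.2.2, slope_def_field,
    (h.hasDerivAt_antideriv t ht).deriv, show t + r - (t - r) = 2 * r by ring]
  field_simp

theorem osc_identity_symm (h : IsMonotoneSolution g F p q) {r δ : ℝ}
    (hr : p < t - r ∧ t - r < t + r ∧ t + r < q) (hδ : δ = meanPoint g F (t - r) (t + r) - t) :
    2 * r * (deriv F (t + r) - deriv F (t - r)) - 4 * (F (t + r) + F (t - r) - 2 * F t) =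
      8 * (deriv F (t + δ) * δ - (F (t + δ) - F t)) := by
  obtain ⟨hp, hlt, hq⟩ := hr
  have hmem := h.meanPoint_mem hp hlt hq
  have hmean := h.apply_meanPoint hp hlt hq
  rw [slope_def_field, eq_div_iff (sub_pos.2 hlt).ne'] at hmean
  have hosc := h.osc_identity _ _ _ hp hmem.1 hmem.2 hq hmean
  rw [hδ, add_sub_cancel, (h.hasDerivAt_antideriv _ ⟨hp.trans hlt, hq⟩).deriv,
    (h.hasDerivAt_antideriv _ ⟨hp, hlt.trans hq⟩).deriv,
    (h.hasDerivAt_antideriv _ (h.meanPoint_mem_Ioo hp ⟨hlt, hq⟩)).deriv]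
  linear_combination hosc + 4 * hmean

/-- Compare the expansions of the two sides of `osc_identity_symm` to fourth order in the radius. -/
theorem iteratedDeriv_ode (h : IsMonotoneSolution g F p q) (ht : t ∈ Ioo p q)
    (hF : ContDiffAt ℝ 4 F t) (hF2 : iteratedDeriv 2 F t ≠ 0) :
    3 * (iteratedDeriv 2 F t * iteratedDeriv 4 F t) = iteratedDeriv 3 F t ^ 2 := by
  have hg : HasDerivAt g (iteratedDeriv 2 F t) t := by
    rw [iteratedDeriv_succ, iteratedDeriv_one]
    exact ((hF.derivWithin (m := 3) (by norm_num)).differentiableAt (by norm_num)).hasDerivAt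
      |>.congr_of_eventuallyEq (h.deriv_antideriv_eventuallyEq ht).symm
  have hδsq := h.tendsto_meanPoint_symm_sub_div_sq ht (hF.of_le (by norm_num)) hg hF2
  have hrem := (isLittleO_deriv_mul_sub (hF.of_le (by norm_num))).comp_tendsto
    (h.tendsto_meanPoint_symm_sub ht)
  set δ : ℝ → ℝ := fun r ↦ meanPoint g F (t - r) (t + r) - t
  have hbig : (fun r ↦ δ r ^ 2) =O[𝓝[>] 0] fun r ↦ r ^ 4 := by
    have hδO : δ =O[𝓝[>] 0] fun r ↦ r ^ 2 :=
      Asymptotics.isBigO_of_div_tendsto_nhds (by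
        filter_upwards [self_mem_nhdsWithin] with r (hr : 0 < r) hr0
        exact absurd hr0 (by positivity)) _ hδsq
    simpa only [← pow_mul] using hδO.pow 2
  have hlim := ((hrem.trans_isBigO hbig).tendsto_div_nhds_zero.const_mul 8).add
    ((hδsq.pow 2).const_mul (4 * iteratedDeriv 2 F t))
  have hsymm := (tendsto_symm_deriv_sub_div_pow_four hF).mono_left (nhdsGT_le_nhdsNE (0 : ℝ))
  have heq := tendsto_nhds_unique_of_eventuallyEq hsymm hlim (by
    filter_upwards [eventually_lt_sub_and_add_lt ht, self_mem_nhdsWithin] with r hr (hr0 : 0 < r)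
    rw [h.osc_identity_symm (δ := δ r) hr rfl, Function.comp_apply, div_pow]
    change _ = _ + 4 * iteratedDeriv 2 F t * (δ r ^ 2 / (r ^ 2) ^ 2)
    field_simp
    ring)
  field_simp at heq
  linarith

end IsMonotoneSolution

/-! ### Positive solutions of `3 u u'' = u' ^ 2` -/

section PowerFunctions

variable {s : Set ℝ} {A B : ℝ}

theorem exists_eq_add_of_hasDerivAt_eq {f g f' : ℝ → ℝ} (hs : IsOpen s) (hs' : IsPreconnected s)
    (hf : ∀ t ∈ s, HasDerivAt f (f' t) t) (hg : ∀ t ∈ s, HasDerivAt g (f' t) t) :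
    ∃ c, ∀ t ∈ s, f t = g t + c := by
  obtain ⟨c, hc⟩ := hs.exists_eq_add_of_deriv_eq hs'
    (fun t ht ↦ (hf t ht).differentiableAt.differentiableWithinAt)
    (fun t ht ↦ (hg t ht).differentiableAt.differentiableWithinAt)
    (fun t ht ↦ (hf t ht).deriv.trans (hg t ht).deriv.symm)
  exact ⟨c, hc⟩

theorem exists_eq_mul_add_of_hasDerivAt {f : ℝ → ℝ} {c : ℝ} (hs : IsOpen s)
    (hs' : IsPreconnected s) (hf : ∀ t ∈ s, HasDerivAt f c t) :
    ∃ d, ∀ t ∈ s, f t = c * t + d :=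
  exists_eq_add_of_hasDerivAt_eq hs hs' hf fun _ _ ↦ hasDerivAt_const_mul c

/-- The equation says that `u ^ (2 / 3)` has vanishing second derivative. -/
theorem exists_rpow_two_thirds_eq_mul_add {u u' u'' : ℝ → ℝ} (hs : IsOpen s)
    (hs' : IsPreconnected s) (hu : ∀ t ∈ s, HasDerivAt u (u' t) t)
    (hu' : ∀ t ∈ s, HasDerivAt u' (u'' t) t) (hpos : ∀ t ∈ s, 0 < u t)
    (hode : ∀ t ∈ s, 3 * (u t * u'' t) = u' t ^ 2) :
    ∃ A B, ∀ t ∈ s, u t ^ (2 / 3 : ℝ) = A * t + B := by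
  have hw : ∀ t ∈ s, HasDerivAt (fun t ↦ u t ^ (2 / 3 : ℝ))
      (u' t * (2 / 3) * u t ^ (-(1 / 3) : ℝ)) t := fun t ht ↦ by
    simpa only [show (2 / 3 - 1 : ℝ) = -(1 / 3) by norm_num]
      using (hu t ht).rpow_const (p := 2 / 3) (.inl (hpos t ht).ne')
  have hw' : ∀ t ∈ s, HasDerivAt (fun t ↦ u' t * (2 / 3) * u t ^ (-(1 / 3) : ℝ)) 0 t := by
    intro t ht
    have hrpow : u t ^ (-(1 / 3) : ℝ) = u t * u t ^ (-(1 / 3) - 1 : ℝ) := by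
      rw [Real.rpow_sub_one (hpos t ht).ne', mul_div_cancel₀ _ (hpos t ht).ne']
    refine (((hu' t ht).mul_const _).mul
      ((hu t ht).rpow_const (p := -(1 / 3)) (.inl (hpos t ht).ne'))).congr_deriv ?_
    rw [hrpow]
    linear_combination 2 / 9 * u t ^ (-(1 / 3) - 1 : ℝ) * hode t ht
  obtain ⟨A, hA⟩ := exists_eq_add_of_hasDerivAt_eq hs hs' hw' fun t _ ↦ hasDerivAt_const t 0
  obtain ⟨B, hB⟩ := exists_eq_mul_add_of_hasDerivAt hs hs'
    fun t ht ↦ (hw t ht).congr_deriv ((hA t ht).trans (zero_add A))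
  exact ⟨A, B, hB⟩

theorem hasDerivAt_sqrt_mul_add_pow {t : ℝ} (n : ℕ) (ht : 0 < A * t + B) :
    HasDerivAt (fun t ↦ √(A * t + B) ^ (n + 2)) ((n + 2) / 2 * A * √(A * t + B) ^ n) t := by
  have hsqrt := (Real.sqrt_pos.2 ht).ne'
  refine (((hasDerivAt_const_mul A).add_const B |>.sqrt ht.ne').pow (n + 2)).congr_deriv ?_
  push_cast [show n + 2 - 1 = n + 1 by omega]
  field_simp
  ring

theorem exists_eq_sqrt_pow_five {g : ℝ → ℝ} (hs : IsOpen s) (hs' : IsPreconnected s)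
    (hA : A ≠ 0) (hpos : ∀ t ∈ s, 0 < A * t + B)
    (hg : ∀ t ∈ s, HasDerivAt g (√(A * t + B) ^ 3) t) :
    ∃ D, ∀ t ∈ s, g t = 2 / (5 * A) * √(A * t + B) ^ 5 + D :=
  exists_eq_add_of_hasDerivAt_eq hs hs' hg fun t ht ↦
    ((hasDerivAt_sqrt_mul_add_pow 3 (hpos t ht)).const_mul (2 / (5 * A))).congr_deriv (by
      push_cast
      field_simp
      norm_num)

theorem exists_eq_sqrt_pow_seven {F : ℝ → ℝ} {D : ℝ} (hs : IsOpen s) (hs' : IsPreconnected s)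
    (hA : A ≠ 0) (hpos : ∀ t ∈ s, 0 < A * t + B)
    (hF : ∀ t ∈ s, HasDerivAt F (2 / (5 * A) * √(A * t + B) ^ 5 + D) t) :
    ∃ E, ∀ t ∈ s, F t = 4 / (35 * A ^ 2) * √(A * t + B) ^ 7 + D * t + E :=
  exists_eq_add_of_hasDerivAt_eq hs hs' hF fun t ht ↦
    (((hasDerivAt_sqrt_mul_add_pow 5 (hpos t ht)).const_mul (4 / (35 * A ^ 2))).add
      (hasDerivAt_const_mul D)).congr_deriv (by
        push_cast
        field_simp
        ring)

end PowerFunctions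

section Eliminant

open Polynomial

/-- The polynomial in `u` obtained by eliminating `w` from the equations of `isRoot_eliminant`,
which are the mean value condition and the oscillation identity for `g t = √t ^ 5` on an interval
`(u ^ 2, v ^ 2)` with mean point `w ^ 2`. -/
noncomputable def eliminant (v : ℝ) : ℝ[X] :=
  C (49 ^ 6) * ((C (v ^ 2) - X ^ 2) ^ 2 * (C (v ^ 5) - X ^ 5) +
    C (16 / 7) * ((C (v ^ 7) - X ^ 7) * X ^ 2 - X ^ 7 * (C (v ^ 2) - X ^ 2))) ^ 5 *
      (C (v ^ 2) - X ^ 2) ^ 2 - C (4 * 80 ^ 5) * (C (v ^ 7) - X ^ 7) ^ 7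

variable {u v w : ℝ}

theorem eval_eliminant : (eliminant v).eval u =
    49 ^ 6 * ((v ^ 2 - u ^ 2) ^ 2 * (v ^ 5 - u ^ 5) +
      16 / 7 * ((v ^ 7 - u ^ 7) * u ^ 2 - u ^ 7 * (v ^ 2 - u ^ 2))) ^ 5 * (v ^ 2 - u ^ 2) ^ 2 -
        4 * 80 ^ 5 * (v ^ 7 - u ^ 7) ^ 7 := by
  simp only [eliminant, eval_sub, eval_mul, eval_add, eval_pow, eval_C, eval_X]

theorem eliminant_ne_zero (hv : v ≠ 0) : eliminant v ≠ 0 := fun h ↦ by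
  have heval : (49 ^ 6 - 4 * 80 ^ 5) * v ^ 49 = 0 := by
    rw [← eval_zero (x := 0), ← h, eval_eliminant]
    ring
  exact (mul_ne_zero (by norm_num) (pow_ne_zero 49 hv)) heval

theorem isRoot_eliminant (hmean : 7 * (w ^ 5 * (v ^ 2 - u ^ 2)) = 2 * (v ^ 7 - u ^ 7))
    (hosc : 7 * ((v ^ 2 - u ^ 2) * (v ^ 5 - u ^ 5)) =
      8 * (7 * (w ^ 5 * (w ^ 2 - u ^ 2)) - 2 * (w ^ 7 - u ^ 7))) :
    (eliminant v).IsRoot u := by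
  have hlin : (v ^ 2 - u ^ 2) ^ 2 * (v ^ 5 - u ^ 5) +
      16 / 7 * ((v ^ 7 - u ^ 7) * u ^ 2 - u ^ 7 * (v ^ 2 - u ^ 2)) =
        80 / 49 * (v ^ 7 - u ^ 7) * w ^ 2 := by
    linear_combination (v ^ 2 - u ^ 2) / 7 * hosc + (40 / 49 * w ^ 2 - 8 / 7 * u ^ 2) * hmean
  rw [IsRoot.def, eval_eliminant, hlin]
  linear_combination 80 ^ 5 * (v ^ 7 - u ^ 7) ^ 5 *
    (7 * (w ^ 5 * (v ^ 2 - u ^ 2)) + 2 * (v ^ 7 - u ^ 7)) * hmean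

end Eliminant

namespace IsMonotoneSolution

variable {g F : ℝ → ℝ} {p q A B D E : ℝ}

theorem isRoot_eliminant_sqrt (h : IsMonotoneSolution g F p q) (hA : A ≠ 0)
    (hpos : ∀ t ∈ Ioo p q, 0 < A * t + B)
    (hg : ∀ t ∈ Ioo p q, g t = 2 / (5 * A) * √(A * t + B) ^ 5 + D)
    (hF : ∀ t ∈ Ioo p q, F t = 4 / (35 * A ^ 2) * √(A * t + B) ^ 7 + D * t + E)
    {x y : ℝ} (hx : p < x) (hxy : x < y) (hy : y < q) :
    (eliminant √(A * y + B)).IsRoot √(A * x + B) := by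
  obtain ⟨c, hc, hmean⟩ := h.exists_mem_Ioo_eq_slope hx hxy hy
  rw [slope_def_field, eq_div_iff (sub_pos.2 hxy).ne'] at hmean
  have hosc := h.osc_identity x y c hx hc.1 hc.2 hy hmean
  have hx' : x ∈ Ioo p q := ⟨hx, hxy.trans hy⟩
  have hy' : y ∈ Ioo p q := ⟨hx.trans hxy, hy⟩
  have hc' : c ∈ Ioo p q := ⟨hx.trans hc.1, hc.2.trans hy⟩
  have hsub : ∀ {s t}, s ∈ Ioo p q → t ∈ Ioo p q →
      t - s = (√(A * t + B) ^ 2 - √(A * s + B) ^ 2) / A := by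
    intro s t hs ht
    rw [Real.sq_sqrt (hpos t ht).le, Real.sq_sqrt (hpos s hs).le]
    field_simp
    ring
  rw [hg c hc', hF y hy', hF x hx'] at hmean
  rw [hg c hc', hg y hy', hg x hx', hF c hc', hF x hx'] at hosc
  refine isRoot_eliminant (w := √(A * c + B)) ?_ ?_
  · have hmean' : 2 / (5 * A) * √(A * c + B) ^ 5 * (y - x) =
        4 / (35 * A ^ 2) * (√(A * y + B) ^ 7 - √(A * x + B) ^ 7) := by
      linear_combination hmean
    rw [hsub hx' hy'] at hmean'
    field_simp at hmean'
    linear_combination hmean' / 10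
  · have hosc' : (y - x) * (2 / (5 * A) * (√(A * y + B) ^ 5 - √(A * x + B) ^ 5)) =
        8 * (2 / (5 * A) * √(A * c + B) ^ 5 * (c - x) -
          4 / (35 * A ^ 2) * (√(A * c + B) ^ 7 - √(A * x + B) ^ 7)) := by
      linear_combination hosc
    rw [hsub hx' hy', hsub hx' hc'] at hosc'
    field_simp at hosc'
    linear_combination hosc' / 10

theorem not_sqrt_pow_five (h : IsMonotoneSolution g F p q) (hpq : p < q) (hA : A ≠ 0)
    (hpos : ∀ t ∈ Ioo p q, 0 < A * t + B)
    (hg : ∀ t ∈ Ioo p q, g t = 2 / (5 * A) * √(A * t + B) ^ 5 + D)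
    (hF : ∀ t ∈ Ioo p q, F t = 4 / (35 * A ^ 2) * √(A * t + B) ^ 7 + D * t + E) : False := by
  obtain ⟨y, hpy, hyq⟩ := exists_between hpq
  have hinj : InjOn (fun t ↦ √(A * t + B)) (Ioo p y) := by
    intro s hs t ht hst
    have hs' := hpos s ⟨hs.1, hs.2.trans hyq⟩
    have ht' := hpos t ⟨ht.1, ht.2.trans hyq⟩
    exact mul_left_cancel₀ hA (add_right_cancel ((Real.sqrt_inj hs'.le ht'.le).1 hst))
  have hroots : ((fun t ↦ √(A * t + B)) '' Ioo p y) ⊆ {u | (eliminant √(A * y + B)).IsRoot u} := by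
    rintro _ ⟨x, hx, rfl⟩
    exact h.isRoot_eliminant_sqrt hA hpos hg hF hx.1 hx.2 hyq
  exact eliminant_ne_zero (Real.sqrt_pos.2 (hpos y ⟨hpy, hyq⟩)).ne'
    (Polynomial.eq_zero_of_infinite_isRoot _ (((Ioo_infinite hpy).image hinj).mono hroots))

theorem iteratedDeriv_succ_antideriv (h : IsMonotoneSolution g F p q) (n : ℕ) {t : ℝ}
    (ht : t ∈ Ioo p q) : iteratedDeriv (n + 1) F t = iteratedDeriv n g t := by
  rw [iteratedDeriv_succ', (h.deriv_antideriv_eventuallyEq ht).iteratedDeriv_eq]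

theorem exists_deriv_rpow_two_thirds_eq (h : IsMonotoneSolution g F p q)
    (hpos : ∀ t ∈ Ioo p q, 0 < deriv g t) :
    ∃ A B, ∀ t ∈ Ioo p q, deriv g t ^ (2 / 3 : ℝ) = A * t + B := by
  have hg : ContDiffOn ℝ (3 + 1) g (Ioo p q) :=
    h.contDiffOn_of_deriv_ne_zero (fun t ht ↦ (hpos t ht).ne') 3
  have hg' : ContDiffOn ℝ 3 (deriv g) (Ioo p q) := hg.deriv_of_isOpen isOpen_Ioo (by norm_num)
  have hg'' : ContDiffOn ℝ 2 (deriv (deriv g)) (Ioo p q) :=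
    hg'.deriv_of_isOpen isOpen_Ioo (by norm_num)
  have hasDerivAt_deriv' {u : ℝ → ℝ} {n : WithTop ℕ∞} (hu : ContDiffOn ℝ n u (Ioo p q))
      (hn : n ≠ 0) : ∀ t ∈ Ioo p q, HasDerivAt u (deriv u t) t := fun t ht ↦
    ((hu.differentiableOn hn).differentiableAt (isOpen_Ioo.mem_nhds ht)).hasDerivAt
  refine exists_rpow_two_thirds_eq_mul_add isOpen_Ioo isPreconnected_Ioo
    (hasDerivAt_deriv' hg' (by norm_num)) (hasDerivAt_deriv' hg'' (by norm_num)) hpos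
    fun t ht ↦ ?_
  have hode := h.iteratedDeriv_ode ht (h.contDiffAt_antideriv (n := 4) (hg.of_le (by norm_num)) ht)
  simp only [h.iteratedDeriv_succ_antideriv _ ht, iteratedDeriv_succ, iteratedDeriv_zero] at hode
  exact hode (hpos t ht).ne'

theorem exists_deriv_eq_of_pos (h : IsMonotoneSolution g F p q)
    (hpos : ∀ t ∈ Ioo p q, 0 < deriv g t) : ∃ c, ∀ t ∈ Ioo p q, deriv g t = c := by
  rcases le_or_gt q p with hqp | hpq
  · exact ⟨0, by simp [Ioo_eq_empty hqp.not_gt]⟩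
  obtain ⟨A, B, hAB⟩ := h.exists_deriv_rpow_two_thirds_eq hpos
  have hAB_pos : ∀ t ∈ Ioo p q, 0 < A * t + B := fun t ht ↦
    hAB t ht ▸ Real.rpow_pos_of_pos (hpos t ht) _
  have hderiv : ∀ t ∈ Ioo p q, deriv g t = √(A * t + B) ^ 3 := fun t ht ↦ by
    rw [← hAB t ht, Real.sqrt_eq_rpow, ← Real.rpow_mul (hpos t ht).le,
      ← Real.rpow_mul_natCast (hpos t ht).le]
    norm_num
  rcases eq_or_ne A 0 with rfl | hA
  · exact ⟨√B ^ 3, by simpa using hderiv⟩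
  obtain ⟨D, hD⟩ := exists_eq_sqrt_pow_five isOpen_Ioo isPreconnected_Ioo hA hAB_pos
    fun t ht ↦ hderiv t ht ▸ h.hasDerivAt_deriv ht
  obtain ⟨E, hE⟩ := exists_eq_sqrt_pow_seven isOpen_Ioo isPreconnected_Ioo hA hAB_pos
    fun t ht ↦ hD t ht ▸ h.hasDerivAt_antideriv t ht
  exact (h.not_sqrt_pow_five hpq hA hAB_pos hD hE).elim

end IsMonotoneSolution

/-! ### Affine solutions -/

theorem exists_eq_const_of_locally_const {X Y : Type*} [TopologicalSpace X] [TopologicalSpace Y]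
    [T1Space Y] {u : X → Y} {s : Set X} (b : Y) (hs : IsOpen s) (hs' : IsPreconnected s)
    (hu : ContinuousOn u s) (hloc : ∀ t ∈ s, u t ≠ b → ∀ᶠ x in 𝓝 t, u x = u t) :
    ∃ c, ∀ t ∈ s, u t = c := by
  by_cases hb : ∀ t ∈ s, u t = b
  · exact ⟨b, hb⟩
  push Not at hb
  obtain ⟨t₀, ht₀, hne⟩ := hb
  have hopen : IsOpen (s ∩ u ⁻¹' {u t₀}) := isOpen_iff_mem_nhds.2 fun t ⟨ht, hut⟩ ↦
    Filter.inter_mem (hs.mem_nhds ht) (by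
      filter_upwards [hloc t ht (hut ▸ hne)] with x hx using hx.trans hut)
  have hclosed : closure (s ∩ u ⁻¹' {u t₀}) ∩ s ⊆ s ∩ u ⁻¹' {u t₀} := fun t ⟨htc, ht⟩ ↦
    ⟨ht, closure_minimal (image_subset_iff.2 inter_subset_right) isClosed_singleton
      (((hu t ht).mono inter_subset_left).mem_closure_image htc)⟩
  exact ⟨u t₀, fun t ht ↦
    (hs'.subset_of_closure_inter_subset hopen ⟨t₀, ht₀, ht₀, rfl⟩ hclosed ht).2⟩

namespace IsMonotoneSolution

variable {g F : ℝ → ℝ} {p q : ℝ}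

theorem deriv_nonneg (h : IsMonotoneSolution g F p q) {t : ℝ} (ht : t ∈ Ioo p q) :
    0 ≤ deriv g t := by
  rw [← derivWithin_of_isOpen isOpen_Ioo ht]
  exact h.strictMonoOn.monotoneOn.derivWithin_nonneg

theorem deriv_eventually_const (h : IsMonotoneSolution g F p q) {t : ℝ} (ht : t ∈ Ioo p q)
    (hne : deriv g t ≠ 0) : ∀ᶠ x in 𝓝 t, deriv g x = deriv g t := by
  have hcont : ContinuousOn (deriv g) (Ioo p q) :=
    h.contDiffOn_one.continuousOn_deriv_of_isOpen isOpen_Ioo le_rfl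
  have hpos : ∀ᶠ x in 𝓝 t, x ∈ Ioo p q ∧ 0 < deriv g x :=
    (isOpen_Ioo.eventually_mem ht).and ((hcont.continuousAt (isOpen_Ioo.mem_nhds ht)).eventually
      (lt_mem_nhds ((h.deriv_nonneg ht).lt_of_ne' hne)))
  obtain ⟨p', q', ht', hsub⟩ := mem_nhds_iff_exists_Ioo_subset.1 hpos
  obtain ⟨hp, hq⟩ := (Ioo_subset_Ioo_iff (ht'.1.trans ht'.2)).1 fun x hx ↦ (hsub hx).1
  obtain ⟨c, hc⟩ := (h.mono hp hq).exists_deriv_eq_of_pos fun x hx ↦ (hsub hx).2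
  filter_upwards [isOpen_Ioo.mem_nhds ht'] with x hx using (hc x hx).trans (hc t ht').symm

theorem exists_eq_mul_add (h : IsMonotoneSolution g F p q) :
    ∃ α β, ∀ t ∈ Ioo p q, g t = α * t + β := by
  obtain ⟨α, hα⟩ := exists_eq_const_of_locally_const 0 isOpen_Ioo isPreconnected_Ioo
    (h.contDiffOn_one.continuousOn_deriv_of_isOpen isOpen_Ioo le_rfl)
    fun t ht hne ↦ h.deriv_eventually_const ht hne
  exact ⟨α, exists_eq_mul_add_of_hasDerivAt isOpen_Ioo isPreconnected_Ioo
    fun t ht ↦ hα t ht ▸ h.hasDerivAt_deriv ht⟩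

end IsMonotoneSolution

section Affine

open scoped NNReal

variable {f g : ℝ → ℝ} {a b p q x y : ℝ} {K : ℝ≥0}

theorem varD_eq_of_monotoneOn (hxy : x < y) (hg : LipschitzWith K g)
    (hmono : MonotoneOn g (Icc x y)) : varD g x y = ENNReal.ofReal (g y - g x) := by
  refine le_antisymm (varD_le_of_monotoneOn hxy.le
    hg.lipschitzOnWith.absolutelyContinuousOnInterval hmono) ?_
  exact (ENNReal.ofReal_le_ofReal (le_abs_self _)).trans (ofReal_abs_sub_le_varD hg.continuous hxy
    (right_mem_Icc.2 hxy.le) (left_mem_Icc.2 hxy.le))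

theorem ae_eq_mul_add_unique {α β α' β' : ℝ} (hpq : p < q)
    (h : ∀ᵐ t ∂volume.restrict (Ioo p q), f t = α * t + β)
    (h' : ∀ᵐ t ∂volume.restrict (Ioo p q), f t = α' * t + β') : α = α' ∧ β = β' := by
  have heq : EqOn (fun t ↦ α * t + β) (fun t ↦ α' * t + β') (Ioo p q) :=
    Measure.eqOn_open_of_ae_eq ((EventuallyEq.symm h).trans h') isOpen_Ioo (by fun_prop)
      (by fun_prop)
  obtain ⟨s, hs⟩ := exists_between hpq
  obtain ⟨t, ht⟩ := exists_between hs.2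
  have hs_eq : α * s + β = α' * s + β' := heq hs
  have ht_eq : α * t + β = α' * t + β' := heq ⟨hs.1.trans ht.1, ht.2⟩
  have hα : α = α' := mul_right_cancel₀ (sub_pos.2 ht.1).ne' (by linear_combination ht_eq - hs_eq)
  exact ⟨hα, by rw [hα] at hs_eq; linarith⟩

theorem exists_ae_eq_mul_add_of_forall_Ioo (hab : a < b)
    (h : ∀ p q, a < p → p < q → q < b →
      ∃ α β, ∀ᵐ t ∂volume.restrict (Ioo p q), f t = α * t + β) :
    ∃ α β, ∀ᵐ t ∂volume.restrict (Ioo a b), f t = α * t + β := by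
  obtain ⟨p₀, hap₀, hp₀b⟩ := exists_between hab
  obtain ⟨q₀, hpq₀, hq₀b⟩ := exists_between hp₀b
  obtain ⟨α, β, hαβ⟩ := h p₀ q₀ hap₀ hpq₀ hq₀b
  refine ⟨α, β, ?_⟩
  rw [ae_restrict_iff' measurableSet_Ioo, ae_iff]
  refine measure_null_of_locally_null _ fun t ht ↦ ?_
  simp only [Classical.not_imp, mem_ofPred_eq] at ht
  obtain ⟨p, hap, hp⟩ := exists_between (lt_min ht.1.1 hap₀)
  obtain ⟨q, hq, hqb⟩ := exists_between (max_lt ht.1.2 hq₀b)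
  obtain ⟨hpt, hpp₀⟩ := lt_min_iff.1 hp
  obtain ⟨htq, hq₀q⟩ := max_lt_iff.1 hq
  obtain ⟨α', β', hαβ'⟩ := h p q hap (hpt.trans htq) hqb
  obtain ⟨rfl, rfl⟩ := ae_eq_mul_add_unique hpq₀ hαβ
    (ae_restrict_of_ae_restrict_of_subset (Ioo_subset_Ioo hpp₀.le hq₀q.le) hαβ')
  rw [ae_restrict_iff' measurableSet_Ioo, ae_iff] at hαβ'
  refine ⟨_, inter_mem_nhdsWithin _ (Ioo_mem_nhds hpt htq), measure_mono_null ?_ hαβ'⟩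
  exact fun x ⟨hx, hmem⟩ himp ↦ hx fun _ ↦ himp hmem

namespace OscIdentityOn

theorem isMonotoneSolution (h : OscIdentityOn g p q) (hg : LipschitzWith K g)
    (hmono : StrictMonoOn g (Ioo p q)) :
    IsMonotoneSolution g (fun t ↦ ∫ s in 0..t, g s) p q where
  hasDerivAt_antideriv t _ := (hg.continuous.integral_hasStrictDerivAt 0 t).hasDerivAt
  strictMonoOn := hmono
  osc_identity x y c hx hxc hcy hy hmean := by
    have hxy : x < y := hxc.trans hcy
    have hmono' : MonotoneOn g (Icc x y) := hmono.monotoneOn.mono (Icc_subset_Ioo hx hy)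
    have hint : ∀ u v, IntervalIntegrable g volume u v := hg.continuous.intervalIntegrable
    simp only [intervalIntegral.integral_interval_sub_left (hint _ _) (hint _ _)] at hmean ⊢
    have hosc := mul_oscI_of_monotoneOn hmono' ⟨hxc, hcy⟩ (by linarith)
    have hvar : g y - g x = 4 * oscI g x y := by
      rw [← ENNReal.ofReal_eq_ofReal_iff, ← varD_eq_of_monotoneOn hxy hg hmono',
        h.varD_eq hx hxy hy]
      · exact sub_nonneg.2 (hmono' (left_mem_Icc.2 hxy.le) (right_mem_Icc.2 hxy.le) hxy.le)
      · exact mul_nonneg zero_le_four (oscI_nonneg g hxy.le)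
    linear_combination (y - x) * hvar + 4 * hosc

theorem exists_eq_mul_add (h : OscIdentityOn g p q) (hg : LipschitzWith K g) (hpq : p < q) :
    ∃ α β, ∀ t ∈ Ioo p q, g t = α * t + β := by
  by_cases hinj : InjOn g (Ioo p q)
  · rcases hg.continuous.continuousOn.strictMonoOn_of_injOn_Ioo hpq hinj with hmono | hanti
    · exact (h.isMonotoneSolution hg hmono).exists_eq_mul_add
    · obtain ⟨α, β, hαβ⟩ := (h.neg.isMonotoneSolution hg.neg hanti.neg).exists_eq_mul_add
      exact ⟨-α, -β, fun t ht ↦ by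
        have hneg : -g t = α * t + β := hαβ t ht
        linear_combination -hneg⟩
  · obtain ⟨k, hk⟩ := h.eq_const_of_not_injOn hg.continuous hinj
    exact ⟨0, k, fun t ht ↦ by rw [hk t ht, zero_mul, zero_add]⟩

theorem exists_ae_eq_mul_add (h : OscIdentityOn f a b) (hf : LocallyIntegrableOn f (Ioo a b))
    (hap : a < p) (hpq : p < q) (hqb : q < b) :
    ∃ α β, ∀ᵐ t ∂volume.restrict (Ioo p q), f t = α * t + β := by
  obtain ⟨K, g, hg, hfg⟩ := h.exists_lipschitzWith_ae_eq hf hap hpq hqb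
  obtain ⟨α, β, hαβ⟩ := ((h.mono hap.le hqb.le).congr_ae hfg).exists_eq_mul_add hg hpq
  refine ⟨α, β, (ae_restrict_iff' measurableSet_Ioo).2 ?_⟩
  filter_upwards [hfg] with t ht hmem using (ht hmem).trans (hαβ t hmem)

end OscIdentityOn

end Affine

/-- Main theorem: a locally integrable `f : (a,b) → ℝ` satisfying
`osc(f, I) = (1/4)|Df|(I)` for every open interval `I ⊂⊂ (a, b)` is affine
(almost everywhere). -/
theorem main_affine_rigidity (a b : ℝ) (hab : a < b) (f : ℝ → ℝ)
    (hf : LocallyIntegrableOn f (Set.Ioo a b))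
    (hid : ∀ x y, a < x → x < y → y < b →
      varD f x y = 4 * ENNReal.ofReal (oscI f x y)) :
    ∃ α β : ℝ, ∀ᵐ x ∂(volume.restrict (Set.Ioo a b)), f x = α * x + β := by
  have h : OscIdentityOn f a b := hid
  exact exists_ae_eq_mul_add_of_forall_Ioo hab fun _ _ hap hpq hqb ↦
    h.exists_ae_eq_mul_add hf hap hpq hqb
end
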